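/- Let n ≥ 2 and let V be an irreducible Harish-Chandra module for 𝔏_{S,n}(B) with non-uniformly bounded weight spaces. Then V is a highest weight 𝔏_{S,n}(B)-module: there exist β ∈ ℤ^n and a subgroup K of ℤ^n with ℤ^n = K ⊕ ℤβ, and a non-zero weight vector z ∈ V such that 𝔏_{S,n}(B)⁺·z = 0 (where 𝔏_{S,n}(B)⁺ = ⊕_{d∈ℕ}(𝔏_{S,n}(B))_{K+dβ}) and U(𝔏_{S,n}(B))·z = V. -/

import Mathlib

open scoped TensorProduct

noncomputable section

namespace LoopWitt

/-- The standard pairing `(u | m)` between `ℂⁿ` and `ℤⁿ`. -/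
def pairC {n : ℕ} (u : Fin n → ℂ) (m : Fin n → ℤ) : ℂ := ∑ i, u i * (m i : ℂ)

/-- The standard pairing on `ℂⁿ`. -/
def pairCC {n : ℕ} (u lam : Fin n → ℂ) : ℂ := ∑ i, u i * lam i

/-- `ℤⁿ = K ⊕ ℤβ`. -/
def IsDirectSumDecomp {n : ℕ} (K : AddSubgroup (Fin n → ℤ)) (β : Fin n → ℤ) : Prop :=
  (∀ m : Fin n → ℤ, ∃ a ∈ K, ∃ d : ℤ, m = a + d • β) ∧ ∀ d : ℤ, d • β ∈ K → d = 0

/-- `r` lies in the positive part `K + ℕ₊ β` of `ℤⁿ`. -/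
def posDeg {n : ℕ} (K : AddSubgroup (Fin n → ℤ)) (β : Fin n → ℤ) (r : Fin n → ℤ) : Prop :=
  ∃ a ∈ K, ∃ d : ℤ, 1 ≤ d ∧ r = a + d • β

/-- A representation of the loop Witt algebra `Wₙ ⊗ B`, given by operators
`D u r b` (for `D(u,r) ⊗ b`, where `D(u,r) = Σ uᵢ tʳ dᵢ`), bilinear in `u` and `b`,
subject to the Witt bracket relations. -/
structure WittRep (n : ℕ) (B : Type*) [CommRing B] [Algebra ℂ B]
    (V : Type*) [AddCommGroup V] [Module ℂ V] where
  D : (Fin n → ℂ) → (Fin n → ℤ) → B → Module.End ℂ V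
  D_add_u : ∀ u u' r b, D (u + u') r b = D u r b + D u' r b
  D_smul_u : ∀ (c : ℂ) u r b, D (c • u) r b = c • D u r b
  D_add_b : ∀ u r b b', D u r (b + b') = D u r b + D u r b'
  D_smul_b : ∀ (c : ℂ) u r b, D u r (c • b) = c • D u r b
  comm_DD : ∀ u r b v s b',
    ⁅D u r b, D v s b'⁆ = D (pairC u s • v - pairC v r • u) (r + s) (b * b')

namespace WittRep

variable {n : ℕ} {B : Type*} [CommRing B] [Algebra ℂ B]
  {V : Type*} [AddCommGroup V] [Module ℂ V]

/-- The weight space of weight `lam` with respect to the Cartan subalgebra `H = ⊕ ℂ dᵢ`. -/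
def weightSpace (ρ : WittRep n B V) (lam : Fin n → ℂ) : Submodule ℂ V where
  carrier := {x | ∀ u, ρ.D u 0 1 x = pairCC u lam • x}
  add_mem' := by
    intro a b ha hb u
    rw [map_add, ha u, hb u, smul_add]
  zero_mem' := by intro u; simp
  smul_mem' := by
    intro c a ha u
    rw [map_smul, ha u, smul_comm]

/-- A weight module: the sum of the weight spaces is everything. -/
def IsWeightModule (ρ : WittRep n B V) : Prop :=
  (⨆ lam : Fin n → ℂ, ρ.weightSpace lam) = ⊤

/-- Uniformly bounded weight spaces. -/
def UniformlyBounded (ρ : WittRep n B V) : Prop :=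
  ∃ N : ℕ, ∀ lam, Module.rank ℂ ↥(ρ.weightSpace lam) ≤ (N : Cardinal)

/-- A Harish-Chandra module: a weight module with finite dimensional weight spaces. -/
def HarishChandra (ρ : WittRep n B V) : Prop :=
  ρ.IsWeightModule ∧ ∀ lam, FiniteDimensional ℂ ↥(ρ.weightSpace lam)

/-- A submodule invariant under all the operators. -/
def Invariant (ρ : WittRep n B V) (U : Submodule ℂ V) : Prop :=
  ∀ u r b, ∀ x ∈ U, ρ.D u r b x ∈ U

/-- Irreducibility. -/
def IsIrreducible (ρ : WittRep n B V) : Prop :=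
  (∃ x : V, x ≠ 0) ∧ ∀ U : Submodule ℂ V, ρ.Invariant U → U = ⊥ ∨ U = ⊤

/-- A single point evaluation module. -/
def IsSinglePointEval (ρ : WittRep n B V) : Prop :=
  ∃ η : B →ₐ[ℂ] ℂ, ∀ u r b, ρ.D u r b = η b • ρ.D u r 1

/-- Nontriviality of the action. -/
def IsNontrivial (ρ : WittRep n B V) : Prop := ∃ u r b x, ρ.D u r b x ≠ 0

/-- `z` is a highest weight vector generating the module, with respect to the
triangular decomposition determined by `ℤⁿ = K ⊕ ℤβ`. -/
def IsHWVector (ρ : WittRep n B V) (K : AddSubgroup (Fin n → ℤ)) (β : Fin n → ℤ)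
    (z : V) : Prop :=
  z ≠ 0 ∧ (∃ lam, z ∈ ρ.weightSpace lam) ∧
  (∀ u r b, posDeg K β r → ρ.D u r b z = 0) ∧
  ∀ U : Submodule ℂ V, ρ.Invariant U → z ∈ U → U = ⊤

/-- A highest weight module. -/
def IsHighestWeight (ρ : WittRep n B V) : Prop :=
  ∃ (K : AddSubgroup (Fin n → ℤ)) (β : Fin n → ℤ),
    IsDirectSumDecomp K β ∧ ∃ z, ρ.IsHWVector K β z

end WittRep

/-- A representation of the loop extended Witt algebra `𝔏_{S,n}(B) = (Wₙ ⋉ (S ⊗ Aₙ)) ⊗ B`,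
given by operators `D u r b` (for `D(u,r) ⊗ b`) and `E s m b` (for `s ⊗ tᵐ ⊗ b`),
suitably multilinear, subject to the bracket relations of `𝔏_{S,n}(B)`. -/
structure ExtWittRep (n : ℕ) (S : Type*) [AddCommGroup S] [Module ℂ S]
    (B : Type*) [CommRing B] [Algebra ℂ B]
    (V : Type*) [AddCommGroup V] [Module ℂ V] where
  D : (Fin n → ℂ) → (Fin n → ℤ) → B → Module.End ℂ V
  E : S → (Fin n → ℤ) → B → Module.End ℂ V
  D_add_u : ∀ u u' r b, D (u + u') r b = D u r b + D u' r b
  D_smul_u : ∀ (c : ℂ) u r b, D (c • u) r b = c • D u r b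
  D_add_b : ∀ u r b b', D u r (b + b') = D u r b + D u r b'
  D_smul_b : ∀ (c : ℂ) u r b, D u r (c • b) = c • D u r b
  E_add_s : ∀ s s' m b, E (s + s') m b = E s m b + E s' m b
  E_smul_s : ∀ (c : ℂ) s m b, E (c • s) m b = c • E s m b
  E_add_b : ∀ s m b b', E s m (b + b') = E s m b + E s m b'
  E_smul_b : ∀ (c : ℂ) s m b, E s m (c • b) = c • E s m b
  comm_DD : ∀ u r b v s b',
    ⁅D u r b, D v s b'⁆ = D (pairC u s • v - pairC v r • u) (r + s) (b * b')
  comm_DE : ∀ u r b s m b', ⁅D u r b, E s m b'⁆ = pairC u m • E s (m + r) (b * b')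
  comm_EE : ∀ s m b s' m' b', ⁅E s m b, E s' m' b'⁆ = 0

namespace ExtWittRep

variable {n : ℕ} {S : Type*} [AddCommGroup S] [Module ℂ S]
  {B : Type*} [CommRing B] [Algebra ℂ B]
  {V : Type*} [AddCommGroup V] [Module ℂ V]

/-- The weight space of the weight given by `lam` on `H` and the linear functional `c`
on `S ≅ S ⊗ t⁰ (⊗ 1)`, with respect to the Cartan subalgebra `H ⊕ (S ⊗ t⁰) (⊗ 1)`. -/
def weightSpace (ρ : ExtWittRep n S B V) (lam : Fin n → ℂ) (c : S →ₗ[ℂ] ℂ) :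
    Submodule ℂ V where
  carrier := {x | (∀ u, ρ.D u 0 1 x = pairCC u lam • x) ∧ ∀ s, ρ.E s 0 1 x = c s • x}
  add_mem' := by
    intro a b ha hb
    refine ⟨fun u => ?_, fun s => ?_⟩
    · rw [map_add, ha.1 u, hb.1 u, smul_add]
    · rw [map_add, ha.2 s, hb.2 s, smul_add]
  zero_mem' := by exact ⟨fun u => by simp, fun s => by simp⟩
  smul_mem' := by
    intro t a ha
    refine ⟨fun u => ?_, fun s => ?_⟩
    · rw [map_smul, ha.1 u, smul_comm]
    · rw [map_smul, ha.2 s, smul_comm]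

/-- A weight module: the weight spaces span. -/
def IsWeightModule (ρ : ExtWittRep n S B V) : Prop :=
  (⨆ p : (Fin n → ℂ) × (S →ₗ[ℂ] ℂ), ρ.weightSpace p.1 p.2) = ⊤

/-- Uniformly bounded weight spaces. -/
def UniformlyBounded (ρ : ExtWittRep n S B V) : Prop :=
  ∃ N : ℕ, ∀ lam c, Module.rank ℂ ↥(ρ.weightSpace lam c) ≤ (N : Cardinal)

/-- Harish-Chandra: a weight module with finite dimensional weight spaces. -/
def HarishChandra (ρ : ExtWittRep n S B V) : Prop :=
  ρ.IsWeightModule ∧ ∀ lam c, FiniteDimensional ℂ ↥(ρ.weightSpace lam c)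

/-- Invariant submodule. -/
def Invariant (ρ : ExtWittRep n S B V) (U : Submodule ℂ V) : Prop :=
  (∀ u r b, ∀ x ∈ U, ρ.D u r b x ∈ U) ∧ (∀ s m b, ∀ x ∈ U, ρ.E s m b x ∈ U)

/-- Irreducibility. -/
def IsIrreducible (ρ : ExtWittRep n S B V) : Prop :=
  (∃ x : V, x ≠ 0) ∧ ∀ U : Submodule ℂ V, ρ.Invariant U → U = ⊥ ∨ U = ⊤

/-- A single point evaluation module. -/
def IsSinglePointEval (ρ : ExtWittRep n S B V) : Prop :=
  ∃ η : B →ₐ[ℂ] ℂ, (∀ u r b, ρ.D u r b = η b • ρ.D u r 1) ∧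
    ∀ s m b, ρ.E s m b = η b • ρ.E s m 1

/-- Single point generalised evaluation module: the action factors through
`𝔤 ⊗ B/𝔪ᵏ` for some maximal ideal `𝔪` and some `k`. -/
def IsGenEval (ρ : ExtWittRep n S B V) : Prop :=
  ∃ 𝔪 : Ideal B, 𝔪.IsMaximal ∧ ∃ k : ℕ, ∀ b ∈ 𝔪 ^ k,
    (∀ u r, ρ.D u r b = 0) ∧ ∀ s m, ρ.E s m b = 0

/-- Nontriviality of the action. -/
def IsNontrivial (ρ : ExtWittRep n S B V) : Prop :=
  (∃ u r b x, ρ.D u r b x ≠ 0) ∨ ∃ s m b x, ρ.E s m b x ≠ 0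

/-- The submodule of vectors on which the whole Lie algebra acts trivially. -/
def trivVectors (ρ : ExtWittRep n S B V) : Submodule ℂ V where
  carrier := {x | (∀ u r b, ρ.D u r b x = 0) ∧ ∀ s m b, ρ.E s m b x = 0}
  add_mem' := by
    intro a b ha hb
    exact ⟨fun u r c => by rw [map_add, ha.1 u r c, hb.1 u r c, add_zero],
      fun s m c => by rw [map_add, ha.2 s m c, hb.2 s m c, add_zero]⟩
  zero_mem' := ⟨fun u r c => by simp, fun s m c => by simp⟩
  smul_mem' := by
    intro t a ha
    exact ⟨fun u r c => by rw [map_smul, ha.1 u r c, smul_zero],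
      fun s m c => by rw [map_smul, ha.2 s m c, smul_zero]⟩

/-- Highest weight vector for the triangular decomposition determined by `ℤⁿ = K ⊕ ℤβ`,
generating the whole module. -/
def IsHWVector (ρ : ExtWittRep n S B V) (K : AddSubgroup (Fin n → ℤ)) (β : Fin n → ℤ)
    (z : V) : Prop :=
  z ≠ 0 ∧ (∃ lam c, z ∈ ρ.weightSpace lam c) ∧
  (∀ u r b, posDeg K β r → ρ.D u r b z = 0) ∧
  (∀ s m b, posDeg K β m → ρ.E s m b z = 0) ∧
  ∀ U : Submodule ℂ V, ρ.Invariant U → z ∈ U → U = ⊤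

/-- Highest weight module. -/
def IsHighestWeight (ρ : ExtWittRep n S B V) : Prop :=
  ∃ (K : AddSubgroup (Fin n → ℤ)) (β : Fin n → ℤ),
    IsDirectSumDecomp K β ∧ ∃ z, ρ.IsHWVector K β z

/-- Invariance under the degree-`K` part `(𝔏_{S,n}(B))_K`. -/
def InvariantK (ρ : ExtWittRep n S B V) (K : AddSubgroup (Fin n → ℤ))
    (U : Submodule ℂ V) : Prop :=
  (∀ u, ∀ r ∈ K, ∀ b, ∀ x ∈ U, ρ.D u r b x ∈ U) ∧
    ∀ s, ∀ m ∈ K, ∀ b, ∀ x ∈ U, ρ.E s m b x ∈ U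

/-- The highest weight space: the `(𝔏_{S,n}(B))_K`-submodule generated by `z`. -/
def hwSpace (ρ : ExtWittRep n S B V) (K : AddSubgroup (Fin n → ℤ)) (z : V) :
    Submodule ℂ V :=
  sInf {U : Submodule ℂ V | z ∈ U ∧ ρ.InvariantK K U}

end ExtWittRep

end LoopWitt

open LoopWitt

/-!
Let `C` be the set of lattice directions `r` such that every vector of `V` is annihilated by all
operators whose degree lies, far enough out, in some open cone around the ray through `r`. It is a
semigroup, because components of degrees `p ≠ q` generate the component of degree `p + q`. Weight
spaces of unbounded dimension contain, for dimension reasons, non-zero vectors killed by finitely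
many components that generate a whole cone of degrees; by irreducibility such annihilation spreads
from one vector to all of `V`, so `C` is non-empty.

For `r ∈ C` and generic `u` the operator `D(u, -r)` is injective, so multiplicities decrease along
`C`, and every weight string in the direction `r` has a top. Below the top, two commuting families
of operators forming a Heisenberg–Virasoro algebra produce `N` independent vectors at depth
`2N + 1`. This growth of multiplicities is used twice. First, if the weights do not end in the
direction `s`, it gives large multiplicities far out along `s` and hence `-s` up to a small error in
`C`, while if they do end, `s` itself lies in `C` up to a small error; so `C` is an open half-space.
Secondly, let `K` be the group of translations preserving `C`. Were there no least element of `C`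
modulo `K`, then `C` would have arbitrarily small elements, and one fixed multiplicity would exceed
every `N`. A least element `β` gives `ℤⁿ = K ⊕ ℤβ`, and the weights are bounded above in the
direction `β`.
-/

namespace LoopWitt

open Filter

section Halfspace

variable {G : Type*} [AddCommGroup G] {C : AddSubsemigroup G} {r s a β : G}

/-- The lineality group of a semigroup `C`: the group of translations mapping `C` onto itself. -/
def lineality (C : AddSubsemigroup G) : AddSubgroup G where
  carrier := {a | ∀ r ∈ C, r + a ∈ C ∧ r - a ∈ C}
  zero_mem' := fun r hr => by simpa using hr
  add_mem' := fun {a a'} ha ha' r hr =>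
    ⟨by simpa only [add_assoc] using (ha' _ (ha r hr).1).1,
      by simpa only [sub_sub] using (ha' _ (ha r hr).2).2⟩
  neg_mem' := fun {a} ha r hr => by
    simpa only [sub_neg_eq_add, ← sub_eq_add_neg] using (ha r hr).symm

lemma add_mem_of_mem_lineality (hr : r ∈ C) (ha : a ∈ lineality C) : r + a ∈ C :=
  (ha r hr).1

/-- A semigroup behaving like the lattice points of an open half-space, possibly
with an irrational boundary hyperplane. -/
structure IsOpenHalfspace (C : AddSubsemigroup G) : Prop where
  zero_notMem : (0 : G) ∉ C
  saturated : ∀ ⦃k : ℤ⦄ ⦃r : G⦄, 0 < k → k • r ∈ C → r ∈ C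
  absorbing : ∀ r ∈ C, ∀ s, ∃ k : ℤ, 0 < k ∧ k • r + s ∈ C
  dichotomy : ∀ r ∈ C, ∀ s, (∀ k : ℤ, 0 < k → r + k • s ∈ C) ∨ ∀ k : ℤ, 0 < k → r - k • s ∈ C

/-- `β` is a least element of the semigroup `C` up to translations in its lineality group. -/
def IsLeastModLineality (C : AddSubsemigroup G) (β : G) : Prop :=
  β ∈ C ∧ ∀ s ∈ C, s - β ∈ C ∨ s - β ∈ lineality C

lemma zsmul_mem_of_pos (hr : r ∈ C) {k : ℤ} (hk : 0 < k) : k • r ∈ C := by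
  induction k, hk using Int.leInduction with
  | base => simpa using hr
  | succ k _ ih => simpa only [add_one_zsmul] using add_mem ih hr

lemma add_zsmul_mem (hs : s ∈ C) (hr : r ∈ C) {k : ℤ} (hk : 0 ≤ k) : s + k • r ∈ C := by
  rcases hk.eq_or_lt with rfl | hk
  · simpa using hs
  · exact add_mem hs (zsmul_mem_of_pos hr hk)

namespace IsOpenHalfspace

lemma neg_notMem (hC : IsOpenHalfspace C) (hr : r ∈ C) : -r ∉ C := fun h =>
  hC.zero_notMem (by simpa using add_mem hr h)

lemma notMem_lineality (hC : IsOpenHalfspace C) (hr : r ∈ C) : r ∉ lineality C := fun h =>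
  hC.zero_notMem (by simpa using (h r hr).2)

lemma mem_lineality_of_forall (hC : IsOpenHalfspace C) (ha : ∀ k : ℤ, r + k • a ∈ C) :
    a ∈ lineality C := by
  have key : ∀ s ∈ C, ∀ b : G, (∀ k : ℤ, r + k • b ∈ C) → s + b ∈ C := by
    intro s hs b hb
    obtain ⟨N, hN, h⟩ := hC.absorbing s hs (-r)
    refine hC.saturated hN ?_
    convert add_mem (hb N) h using 1
    module
  refine fun s hs => ⟨key s hs a ha, ?_⟩
  rw [sub_eq_add_neg]
  exact key s hs (-a) fun k => by simpa using ha (-k)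

lemma mem_or_mem_lineality (hC : IsOpenHalfspace C) (hr : r ∈ C)
    (hs : ∀ k : ℤ, 0 < k → r + k • s ∈ C) : s ∈ C ∨ s ∈ lineality C := by
  by_contra! hcon
  obtain ⟨hsC, hslin⟩ := hcon
  obtain ⟨k, hk⟩ : ∃ k : ℤ, r + k • s ∉ C := by
    by_contra! h
    exact hslin (hC.mem_lineality_of_forall h)
  have hk0 : k < 0 := by
    by_contra! hk0
    rcases hk0.eq_or_lt with rfl | h
    · exact hk (by simpa using hr)
    · exact hk (hs k h)
  -- the two alternatives for `-2ks - r` give `-4ks ∈ C` and `4(r + ks) ∈ C`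
  rcases hC.dichotomy r hr ((-2 * k) • s - r) with h | h
  · refine hsC (hC.saturated (k := -4 * k) (by lia) ?_)
    convert add_mem (h 2 two_pos) hr using 1
    module
  · refine hk (hC.saturated (k := 4) four_pos ?_)
    convert add_mem (h 2 two_pos) hr using 1
    module

lemma trichotomy (hC : IsOpenHalfspace C) (hr : r ∈ C) (s : G) :
    s ∈ C ∨ -s ∈ C ∨ s ∈ lineality C := by
  rcases hC.dichotomy r hr s with h | h
  · exact (hC.mem_or_mem_lineality hr h).imp_right Or.inr
  · refine Or.inr ((hC.mem_or_mem_lineality (s := -s) hr fun k hk => ?_).imp_right neg_mem_iff.1)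
    simpa [sub_eq_add_neg] using h k hk

lemma exists_sub_mem_of_not_exists_isLeast (hC : IsOpenHalfspace C)
    (hmin : ¬ ∃ β, IsLeastModLineality C β) (hr : r ∈ C) : ∃ q ∈ C, r - q ∈ C := by
  by_contra! h
  refine hmin ⟨r, hr, fun s hs => ?_⟩
  have := hC.trichotomy hr (s - r)
  rw [neg_sub] at this
  exact this.imp_right fun h' => h'.resolve_left (h s hs)

lemma exists_sub_mem_sub_mem (hC : IsOpenHalfspace C)
    (hmin : ¬ ∃ β, IsLeastModLineality C β) (hr : r ∈ C) (hs : s ∈ C) :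
    ∃ q ∈ C, r - q ∈ C ∧ s - q ∈ C := by
  rcases hC.trichotomy hr (s - r) with h | h | h
  · obtain ⟨q, hq, hrq⟩ := hC.exists_sub_mem_of_not_exists_isLeast hmin hr
    exact ⟨q, hq, hrq, by simpa using add_mem hrq h⟩
  · obtain ⟨q, hq, hsq⟩ := hC.exists_sub_mem_of_not_exists_isLeast hmin hs
    exact ⟨q, hq, by simpa using add_mem hsq h, hsq⟩
  · obtain ⟨q, hq, hrq⟩ := hC.exists_sub_mem_of_not_exists_isLeast hmin hr
    exact ⟨q, hq, hrq, by simpa using add_mem_of_mem_lineality hrq h⟩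

lemma exists_sub_nsmul_mem (hC : IsOpenHalfspace C)
    (hmin : ¬ ∃ β, IsLeastModLineality C β) (hr : r ∈ C) (t : ℕ) :
    ∃ s ∈ C, r - t • s ∈ C := by
  induction t with
  | zero => exact ⟨r, hr, by simpa using hr⟩
  | succ t ih =>
    obtain ⟨s, hs, hrs⟩ := ih
    obtain ⟨q, hq, hrsq, hsq⟩ := hC.exists_sub_mem_sub_mem hmin hrs hs
    refine ⟨q, hq, ?_⟩
    convert add_zsmul_mem hrsq hsq t.cast_nonneg using 1
    module

lemma exists_mem_lineality_add_zsmul (hC : IsOpenHalfspace C) (hβ : IsLeastModLineality C β)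
    (m : G) : ∃ a ∈ lineality C, ∃ d : ℤ, m = a + d • β := by
  obtain ⟨N, -, hN⟩ := hC.absorbing β hβ.1 (-m)
  obtain ⟨N', -, hN'⟩ := hC.absorbing β hβ.1 m
  obtain ⟨d, hd, hmax⟩ := Int.exists_greatest_of_bdd
    (P := fun d => m - d • β ∈ C ∨ m - d • β ∈ lineality C) (by
      refine ⟨N, fun d hd => ?_⟩
      by_contra! hlt
      have hneg : -(m - d • β) ∈ C := by
        convert add_zsmul_mem hN hβ.1 (sub_nonneg.2 hlt.le) using 1
        module
      rcases hd with h | h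
      · exact hC.neg_notMem h hneg
      · exact hC.notMem_lineality hneg (neg_mem h))
    ⟨-N', Or.inl (by convert hN' using 1; module)⟩
  refine ⟨m - d • β, hd.resolve_left fun h => ?_, d, by abel⟩
  have := hmax (d + 1) (by simpa only [sub_sub, ← add_one_zsmul] using hβ.2 _ h)
  lia

lemma eq_zero_of_zsmul_mem_lineality (hC : IsOpenHalfspace C) (hr : r ∈ C) {d : ℤ}
    (hd : d • r ∈ lineality C) : d = 0 := by
  rcases lt_trichotomy d 0 with h | h | h
  · refine absurd (neg_mem hd) ?_
    rw [← neg_smul]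
    exact hC.notMem_lineality (zsmul_mem_of_pos hr (neg_pos.2 h))
  · exact h
  · exact absurd hd (hC.notMem_lineality (zsmul_mem_of_pos hr h))

lemma isDirectSumDecomp {n : ℕ} {C : AddSubsemigroup (Fin n → ℤ)} {β : Fin n → ℤ}
    (hC : IsOpenHalfspace C) (hβ : IsLeastModLineality C β) :
    IsDirectSumDecomp (lineality C) β :=
  ⟨hC.exists_mem_lineality_add_zsmul hβ, fun _ => hC.eq_zero_of_zsmul_mem_lineality hβ.1⟩

end IsOpenHalfspace

end Halfspace

section Pairing

variable {n : ℕ}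

lemma pairC_add_left (u v : Fin n → ℂ) (p : Fin n → ℤ) :
    pairC (u + v) p = pairC u p + pairC v p :=
  add_dotProduct u v fun i => (p i : ℂ)

lemma pairC_smul_left (c : ℂ) (u : Fin n → ℂ) (p : Fin n → ℤ) :
    pairC (c • u) p = c * pairC u p :=
  smul_dotProduct c u fun i => (p i : ℂ)

lemma pairC_add_right (u : Fin n → ℂ) (p q : Fin n → ℤ) :
    pairC u (p + q) = pairC u p + pairC u q := by
  simp [pairC, mul_add, Finset.sum_add_distrib]

@[simp] lemma pairC_zero_right (u : Fin n → ℂ) : pairC u 0 = 0 := by simp [pairC]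

lemma pairC_neg_right (u : Fin n → ℂ) (p : Fin n → ℤ) : pairC u (-p) = -pairC u p := by
  simp [pairC]

lemma pairC_sub_right (u : Fin n → ℂ) (p q : Fin n → ℤ) :
    pairC u (p - q) = pairC u p - pairC u q := by
  rw [sub_eq_add_neg, pairC_add_right, pairC_neg_right, sub_eq_add_neg]

lemma pairC_zsmul_right (u : Fin n → ℂ) (k : ℤ) (p : Fin n → ℤ) :
    pairC u (k • p) = k * pairC u p := by
  simp [pairC, Finset.mul_sum, mul_left_comm]

lemma pairCC_add_intCast (u lam : Fin n → ℂ) (m : Fin n → ℤ) :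
    pairCC u (lam + fun i => (m i : ℂ)) = pairCC u lam + pairC u m :=
  dotProduct_add u lam fun i => (m i : ℂ)

lemma exists_linearIndependent_int (n : ℕ) : ∃ u : Fin n → ℂ, LinearIndependent ℤ u := by
  have hn : (n : Cardinal) ≤ Module.rank ℚ ℂ := by
    rw [Complex.rank_rat_complex]
    exact (Cardinal.nat_lt_continuum n).le
  obtain ⟨u, hu⟩ := exists_linearIndependent_of_le_rank hn
  exact ⟨u, hu.restrict_scalars fun a b h => by simpa using h⟩

lemma pairC_ne_zero {u : Fin n → ℂ} (hu : LinearIndependent ℤ u) {q : Fin n → ℤ} (hq : q ≠ 0) :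
    pairC u q ≠ 0 := fun h =>
  hq <| funext <| Fintype.linearIndependent_iff.1 hu q <| by
    simpa [pairC, zsmul_eq_mul, mul_comm] using h

lemma exists_pairC_eq_one {r : Fin n → ℤ} (hr : r ≠ 0) : ∃ u : Fin n → ℂ, pairC u r = 1 := by
  obtain ⟨u, hu⟩ := exists_linearIndependent_int n
  exact ⟨(pairC u r)⁻¹ • u, by rw [pairC_smul_left, inv_mul_cancel₀ (pairC_ne_zero hu hr)]⟩

lemma exists_orthogonal (hn : 2 ≤ n) (r : Fin n → ℤ) :
    ∃ w : Fin n → ℂ, w ≠ 0 ∧ pairC w r = 0 := by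
  let f : (Fin n → ℂ) →ₗ[ℂ] ℂ :=
    { toFun := fun u => pairC u r
      map_add' := fun u v => pairC_add_left u v r
      map_smul' := fun c u => pairC_smul_left c u r }
  have hker : LinearMap.ker f ≠ ⊥ := LinearMap.ker_ne_bot_of_finrank_lt (by simp; lia)
  obtain ⟨w, hw, hw0⟩ := (Submodule.ne_bot_iff _).1 hker
  exact ⟨w, hw0, hw⟩

lemma exists_smul_sub_smul_eq {u : Fin n → ℂ} {q₁ q₂ : Fin n → ℤ} (hq : pairC u q₂ ≠ 0)
    (hqq : pairC u (q₂ - q₁) ≠ 0) (y : Fin n → ℂ) :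
    ∃ w, pairC u q₂ • w - pairC w q₁ • u = y := by
  set c : ℂ := pairC y q₁ / pairC u (q₂ - q₁) with hc
  set w : Fin n → ℂ := (pairC u q₂)⁻¹ • (y + c • u) with hw
  have hwq : pairC w q₁ = c := by
    rw [hw, pairC_smul_left, pairC_add_left, pairC_smul_left, inv_mul_eq_iff_eq_mul₀ hq]
    rw [pairC_sub_right] at hqq hc
    rw [hc]
    field_simp
    ring
  exact ⟨w, by rw [hwq, hw, smul_inv_smul₀ hq, add_sub_cancel_right]⟩

lemma exists_norm_le_one_pairC_ne_zero {w : Fin n → ℂ} (hw : w ≠ 0) :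
    ∃ ε : Fin n → ℤ, ‖ε‖ ≤ 1 ∧ pairC w ε ≠ 0 := by
  obtain ⟨i, hi⟩ := Function.ne_iff.1 hw
  exact ⟨Pi.single i 1, by simp [Pi.norm_single], by simpa [pairC, Pi.single_apply] using hi⟩

end Pairing

lemma eventually_mul_add_le {c c' : ℝ} (h : c' < c) (σ σ' : ℝ) :
    ∀ᶠ j : ℤ in atTop, c' * j + σ' ≤ c * j + σ := by
  filter_upwards [(tendsto_intCast_atTop_atTop (R := ℝ)).eventually_ge_atTop
    ((σ' - σ) / (c - c'))] with j hj
  rw [div_le_iff₀ (sub_pos.2 h)] at hj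
  linarith

lemma norm_le_intCast_iff {ι : Type*} [Fintype ι] {ε : ι → ℤ} {k : ℤ} (hk : 0 ≤ k) :
    ‖ε‖ ≤ k ↔ ∀ i, |ε i| ≤ k := by
  rw [pi_norm_le_iff_of_nonneg (by exact_mod_cast hk)]
  exact forall_congr' fun i => by
    rw [Int.norm_eq_abs]
    norm_cast

/-- Used to split a degree into two distinct ones near prescribed places: the bracket of two
components of the same degree does not exhaust the component of the sum. -/
lemma exists_norm_sub_le_add_sub_ne {ι : Type*} [Fintype ι] [Nonempty ι] (p : ι → ℤ)
    {ε : ι → ℤ} {j : ℤ} (hj : 1 ≤ j) (hε : ‖ε‖ ≤ j + 2) :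
    ∃ ε' : ι → ℤ, ‖ε'‖ ≤ 2 ∧ ‖ε - ε'‖ ≤ j + 1 ∧ p + (ε - ε') ≠ ε' := by
  obtain ⟨σ, hσ⟩ : ∃ σ : ι → ℤ, ∀ i, 1 ≤ ε i ∧ σ i = 1 ∨ ε i ≤ 0 ∧ σ i = -1 :=
    ⟨fun i => if 1 ≤ ε i then 1 else -1, fun i => by grind⟩
  obtain ⟨t, ht₁, ht₂, hne⟩ : ∃ t : ℤ, 1 ≤ t ∧ t ≤ 2 ∧ p + (ε - t • σ) ≠ t • σ := by
    by_contra! h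
    obtain ⟨i⟩ := ‹Nonempty ι›
    have h₁ := congrFun (h 1 le_rfl (by lia)) i
    have h₂ := congrFun (h 2 (by lia) le_rfl) i
    simp only [Pi.add_apply, Pi.sub_apply, Pi.smul_apply, smul_eq_mul] at h₁ h₂
    rcases hσ i with ⟨_, h⟩ | ⟨_, h⟩ <;> lia
  refine ⟨t • σ, mod_cast (norm_le_intCast_iff (by lia)).2 fun i => ?_,
    mod_cast (norm_le_intCast_iff (by lia)).2 fun i => ?_, hne⟩
  · rw [Pi.smul_apply, smul_eq_mul, abs_le]
    rcases hσ i with ⟨_, h⟩ | ⟨_, h⟩ <;> rw [h] <;> lia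
  · have := abs_le.1 ((norm_le_intCast_iff (by lia)).1 (mod_cast hε : ‖ε‖ ≤ (j + 2 : ℤ)) i)
    rw [Pi.sub_apply, Pi.smul_apply, smul_eq_mul, abs_le]
    rcases hσ i with ⟨_, h⟩ | ⟨_, h⟩ <;> rw [h] <;> lia

lemma eq_top_of_adjoin_eq_top_of_mul_mem {R A : Type*} [CommSemiring R] [Semiring A] [Algebra R A]
    {s : Set A} (hs : Algebra.adjoin R s = ⊤) {U : Submodule R A} (one_mem : 1 ∈ U)
    (mul_mem : ∀ a ∈ U, ∀ f ∈ s, a * f ∈ U) : U = ⊤ := by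
  rw [← top_le_iff, ← Algebra.top_toSubmodule, ← hs, Algebra.adjoin_eq_span, Submodule.span_le]
  intro a ha
  induction ha using Submonoid.closure_induction_right with
  | one => exact one_mem
  | mul_right a _ f hf ih => exact mul_mem a ih f hf

section HeisenbergVirasoro

variable {K V : Type*} [Field K] [AddCommGroup V] [Module K V]

lemma linearIndependent_of_apply_ne_zero {ι V' : Type*} [AddCommGroup V'] [Module K V']
    {x : ι → V} (f : ι → V →ₗ[K] V') (hne : ∀ i, f i (x i) ≠ 0)
    (hzero : ∀ i j, j ≠ i → f i (x j) = 0) : LinearIndependent K x := by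
  rw [linearIndependent_iff']
  intro s g hg i hi
  have := congrArg (f i) hg
  rw [map_sum, map_zero, Finset.sum_eq_single_of_mem i hi fun j _ hj => by
    rw [map_smul, hzero i j hj, smul_zero], map_smul] at this
  exact (smul_eq_zero.1 this).resolve_right (hne i)

/-- Operators `d i` and `W j` satisfying the brackets `[d i, W j] = j W (i + j)` and
`[W i, W j] = 0` of the centreless twisted Heisenberg-Virasoro algebra, and a vector `v` killed by
those of positive degree on which `W 0` acts by the scalar `γ`. It yields lower bounds for weight
multiplicities. -/
structure IsHeisenbergVirasoroTop (d W : ℤ → Module.End K V) (γ : K) (v : V) : Prop where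
  d_W : ∀ i j x, d i (W j x) = W j (d i x) + (j : K) • W (i + j) x
  W_comm : ∀ i j x, W i (W j x) = W j (W i x)
  W_zero : W 0 v = γ • v
  d_pos : ∀ ⦃j⦄, 0 < j → d j v = 0
  W_pos : ∀ ⦃j⦄, 0 < j → W j v = 0

namespace IsHeisenbergVirasoroTop

variable {d W : ℤ → Module.End K V} {γ : K} {v : V} {i j k t : ℤ}

lemma d_W_W (h : IsHeisenbergVirasoroTop d W γ v) (hi : 0 < i) :
    d i (W j (W k v)) = (k : K) • W j (W (i + k) v) + (j : K) • W (i + j) (W k v) := by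
  rw [h.d_W, h.d_W, h.d_pos hi, map_zero, zero_add, map_smul]

lemma W_W_eq_zero (h : IsHeisenbergVirasoroTop d W γ v) (hj : 0 < j) : W j (W k v) = 0 := by
  rw [h.W_comm, h.W_pos hj, map_zero]

lemma d_d_W_W (h : IsHeisenbergVirasoroTop d W γ v) (hi : 0 < i) (hk : 0 < k) (ht : i + k < t) :
    d i (d (t - i) (W (-k) (W (k - t) v))) =
      ((k - t) * -k : K) • W (i - k) (W (k - i) v) := by
  rw [h.d_W_W (by lia), h.W_W_eq_zero (j := t - i + -k) (by lia), smul_zero, add_zero, map_smul,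
    sub_add_sub_cancel', h.d_W_W hi, add_sub_cancel, h.W_pos hk, map_zero, smul_zero, zero_add,
    smul_smul, ← sub_eq_add_neg]
  push_cast
  rfl

lemma W_sub_W_sub_eq_zero (h : IsHeisenbergVirasoroTop d W γ v) (hik : k ≠ i) :
    W (i - k) (W (k - i) v) = 0 := by
  rcases hik.lt_or_gt with hlt | hlt
  · exact h.W_W_eq_zero (by lia)
  · rw [h.W_pos (by lia), map_zero]

lemma linearIndependent [CharZero K] (h : IsHeisenbergVirasoroTop d W γ v) (hγ : γ ≠ 0)
    (hv : v ≠ 0) {N : ℕ} (ht : 2 * N < t) :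
    LinearIndependent K fun k : Fin N => W (-(k + 1)) (W (k + 1 - t) v) := by
  refine linearIndependent_of_apply_ne_zero (fun i : Fin N => d (i + 1) ∘ₗ d (t - (i + 1)))
    (fun i => ?_) fun i k hki => ?_
  · rw [LinearMap.comp_apply, h.d_d_W_W (by omega) (by omega) (by omega), sub_self, h.W_zero,
      map_smul, h.W_zero]
    have hi : ((i + 1 : ℤ) : K) ≠ 0 := by exact_mod_cast i.val.succ_ne_zero
    have hit : ((i + 1 : ℤ) : K) - t ≠ 0 :=
      sub_ne_zero.2 (Int.cast_injective.ne (by omega : (i : ℤ) + 1 ≠ t))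
    exact smul_ne_zero (mul_ne_zero hit (neg_ne_zero.2 hi)) (smul_ne_zero hγ (smul_ne_zero hγ hv))
  · rw [LinearMap.comp_apply, h.d_d_W_W (by omega) (by omega) (by omega),
      h.W_sub_W_sub_eq_zero (by omega), smul_zero]

end IsHeisenbergVirasoroTop

end HeisenbergVirasoro

namespace ExtWittRep

variable {n : ℕ} {S : Type*} [AddCommGroup S] [Module ℂ S]
  {B : Type*} [CommRing B] [Algebra ℂ B]
  {V : Type*} [AddCommGroup V] [Module ℂ V] {ρ : ExtWittRep n S B V}

section Relations

variable (ρ)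

lemma D_D (u : Fin n → ℂ) (r : Fin n → ℤ) (b : B) (v : Fin n → ℂ) (s : Fin n → ℤ) (b' : B)
    (x : V) : ρ.D u r b (ρ.D v s b' x) =
      ρ.D v s b' (ρ.D u r b x) + ρ.D (pairC u s • v - pairC v r • u) (r + s) (b * b') x := by
  rw [← ρ.comm_DD]
  simp [LieRing.of_associative_ring_bracket]

lemma D_E (u : Fin n → ℂ) (r : Fin n → ℤ) (b : B) (s : S) (m : Fin n → ℤ) (b' : B) (x : V) :
    ρ.D u r b (ρ.E s m b' x) =
      ρ.E s m b' (ρ.D u r b x) + pairC u m • ρ.E s (m + r) (b * b') x := by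
  rw [← LinearMap.smul_apply, ← ρ.comm_DE]
  simp [LieRing.of_associative_ring_bracket]

lemma E_E (s : S) (m : Fin n → ℤ) (b : B) (s' : S) (m' : Fin n → ℤ) (b' : B) (x : V) :
    ρ.E s m b (ρ.E s' m' b' x) = ρ.E s' m' b' (ρ.E s m b x) := by
  have := congrArg (fun f => f x) (ρ.comm_EE s m b s' m' b')
  simpa [LieRing.of_associative_ring_bracket, sub_eq_zero] using this

/-- The action of the degree `q` part `(⊕ᵢ ℂ tᑫ dᵢ ⊕ S ⊗ tᑫ) ⊗ B`, linear in both arguments: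
`act q b (u, s)` is the action of `(D(u,q) + s ⊗ tᑫ) ⊗ b`. -/
def act (q : Fin n → ℤ) : B →ₗ[ℂ] (Fin n → ℂ) × S →ₗ[ℂ] Module.End ℂ V :=
  LinearMap.mk₂ ℂ (fun b p => ρ.D p.1 q b + ρ.E p.2 q b)
    (fun b b' p => by rw [ρ.D_add_b, ρ.E_add_b, add_add_add_comm])
    (fun c b p => by rw [ρ.D_smul_b, ρ.E_smul_b, smul_add])
    (fun b p p' => by
      rw [Prod.fst_add, Prod.snd_add, ρ.D_add_u, ρ.E_add_s, add_add_add_comm])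
    (fun c b p => by rw [Prod.smul_fst, Prod.smul_snd, ρ.D_smul_u, ρ.E_smul_s, smul_add])

@[simp] lemma act_apply (q : Fin n → ℤ) (b : B) (p : (Fin n → ℂ) × S) (x : V) :
    ρ.act q b p x = ρ.D p.1 q b x + ρ.E p.2 q b x :=
  rfl

lemma D_zero_left (q : Fin n → ℤ) (b : B) : ρ.D 0 q b = 0 := by
  simpa using ρ.D_smul_u 0 0 q b

lemma E_zero_left (q : Fin n → ℤ) (b : B) : ρ.E 0 q b = 0 := by
  simpa using ρ.E_smul_s 0 0 q b

end Relations

section CommonKernel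

variable {x : V} {b b' b₁ b₂ : B} {q q₁ q₂ : Fin n → ℤ}

variable (ρ) in
/-- The vectors annihilated by all operators of degree `q` with coefficient `b`. -/
def commonKer (b : B) (q : Fin n → ℤ) : Submodule ℂ V :=
  LinearMap.ker (ρ.act q b).flip

lemma mem_commonKer :
    x ∈ ρ.commonKer b q ↔ (∀ u, ρ.D u q b x = 0) ∧ ∀ s, ρ.E s q b x = 0 := by
  simp only [commonKer, LinearMap.mem_ker, LinearMap.ext_iff, LinearMap.flip_apply, act_apply,
    LinearMap.zero_apply]
  refine ⟨fun h => ⟨fun u => ?_, fun s => ?_⟩, fun h p => by rw [h.1, h.2, add_zero]⟩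
  · simpa [E_zero_left] using h (u, 0)
  · simpa [D_zero_left] using h (0, s)

lemma D_mem_commonKer {s : Fin n → ℤ} (h : x ∈ ρ.commonKer b q)
    (h' : x ∈ ρ.commonKer (b * b') (q + s)) (w : Fin n → ℂ) : ρ.D w s b' x ∈ ρ.commonKer b q := by
  rw [mem_commonKer] at *
  refine ⟨fun u => ?_, fun t => ?_⟩
  · rw [ρ.D_D, h.1, h'.1, map_zero, add_zero]
  · have := ρ.D_E w s b' t q b x
    rwa [h.2, mul_comm, h'.2, map_zero, smul_zero, add_zero, eq_comm] at this

lemma E_mem_commonKer {s : Fin n → ℤ} (h : x ∈ ρ.commonKer b q)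
    (h' : x ∈ ρ.commonKer (b * b') (q + s)) (t : S) : ρ.E t s b' x ∈ ρ.commonKer b q := by
  rw [mem_commonKer] at *
  refine ⟨fun u => ?_, fun t' => ?_⟩
  · rw [ρ.D_E, h.1, add_comm s q, h'.2, map_zero, smul_zero, add_zero]
  · rw [ρ.E_E, h.2, map_zero]

lemma mem_commonKer_add_of_D_eq_zero {u : Fin n → ℂ} (h₁ : ρ.D u q₁ b₁ x = 0)
    (h₂ : x ∈ ρ.commonKer b₂ q₂) (hq : pairC u q₂ ≠ 0) (hqq : pairC u (q₂ - q₁) ≠ 0) :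
    x ∈ ρ.commonKer (b₁ * b₂) (q₁ + q₂) := by
  rw [mem_commonKer] at *
  refine ⟨fun y => ?_, fun s => ?_⟩
  · obtain ⟨w, hw⟩ := exists_smul_sub_smul_eq hq hqq y
    have := ρ.D_D u q₁ b₁ w q₂ b₂ x
    rwa [h₂.1, h₁, map_zero, map_zero, zero_add, hw, eq_comm] at this
  · have := ρ.D_E u q₁ b₁ s q₂ b₂ x
    rw [h₂.2, h₁, map_zero, map_zero, zero_add] at this
    rw [add_comm]
    exact (smul_eq_zero.1 this.symm).resolve_left hq

lemma mem_commonKer_add (h₁ : x ∈ ρ.commonKer b₁ q₁) (h₂ : x ∈ ρ.commonKer b₂ q₂)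
    (hqq : q₁ ≠ q₂) : x ∈ ρ.commonKer (b₁ * b₂) (q₁ + q₂) := by
  obtain ⟨u, hu⟩ := exists_linearIndependent_int n
  by_cases hq : q₂ = 0
  · rw [mul_comm, add_comm]
    exact mem_commonKer_add_of_D_eq_zero ((mem_commonKer.1 h₂).1 u) h₁
      (pairC_ne_zero hu (hq ▸ hqq)) (pairC_ne_zero hu (sub_ne_zero.2 hqq))
  · exact mem_commonKer_add_of_D_eq_zero ((mem_commonKer.1 h₁).1 u) h₂
      (pairC_ne_zero hu hq) (pairC_ne_zero hu (sub_ne_zero.2 hqq.symm))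

lemma mem_commonKer_add_of_forall_norm_le
    (h₁ : ∀ η, ‖η‖ ≤ 1 → x ∈ ρ.commonKer 1 (q₁ + η))
    (h₂ : ∀ η, ‖η‖ ≤ 1 → x ∈ ρ.commonKer b (q₂ + η)) : x ∈ ρ.commonKer b (q₁ + q₂) := by
  rcases isEmpty_or_nonempty (Fin n) with _ | ⟨⟨i⟩⟩
  · simpa [Subsingleton.elim (q₁ + q₂) (q₂ + 0)] using h₂ 0 (by simp)
  obtain ⟨η, hη, hne⟩ : ∃ η : Fin n → ℤ, ‖η‖ ≤ 1 ∧ q₁ + η ≠ q₂ + -η := by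
    by_cases hq : q₁ = q₂
    · refine ⟨Pi.single i 1, by simp [Pi.norm_single], fun h => ?_⟩
      have := congrFun h i
      simp only [hq, Pi.add_apply, Pi.neg_apply, Pi.single_eq_same] at this
      lia
    · exact ⟨0, by simp, by simpa using hq⟩
  simpa [add_add_add_comm] using
    mem_commonKer_add (h₁ η hη) (h₂ (-η) (by rwa [norm_neg])) hne

lemma trivVectors_eq_bot (hirr : ρ.IsIrreducible) (hnub : ¬ ρ.UniformlyBounded) :
    ρ.trivVectors = ⊥ := by
  refine (Submodule.eq_bot_iff _).2 fun x hx => ?_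
  have hinv : ρ.Invariant (ℂ ∙ x) := by
    refine ⟨fun u r b y hy => ?_, fun s m b y hy => ?_⟩ <;>
      obtain ⟨c, rfl⟩ := Submodule.mem_span_singleton.1 hy
    · rw [map_smul, hx.1, smul_zero]
      exact zero_mem _
    · rw [map_smul, hx.2, smul_zero]
      exact zero_mem _
  rcases hirr.2 _ hinv with h | h
  · exact Submodule.span_singleton_eq_bot.1 h
  · have hrank : Module.rank ℂ V ≤ 1 := rank_le_one_iff.2
      ⟨x, fun y => Submodule.mem_span_singleton.1 (h ▸ Submodule.mem_top)⟩
    exact absurd ⟨1, fun lam c => (Submodule.rank_le _).trans (by simpa using hrank)⟩ hnub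

lemma eq_zero_of_forall_mem_commonKer (htriv : ρ.trivVectors = ⊥)
    (h : ∀ b q, x ∈ ρ.commonKer b q) : x = 0 := by
  simp only [mem_commonKer] at h
  exact (Submodule.eq_bot_iff _).1 htriv x ⟨fun u r b => (h b r).1 u, fun s m b => (h b m).2 s⟩

end CommonKernel

section Cone

variable {x : V} {b b' : B} {q r s : Fin n → ℤ} {c c' σ : ℝ}

variable (ρ) in
/-- The vectors annihilated by the operators with coefficient `b` and degree within `c * j + σ` of
`j • r` in the sup norm, for all large `j`. -/
def eventualKer (r : Fin n → ℤ) (c σ : ℝ) (b : B) : Submodule ℂ V where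
  carrier := {x | ∀ᶠ j : ℤ in atTop, ∀ ε : Fin n → ℤ, ‖ε‖ ≤ c * j + σ →
    x ∈ ρ.commonKer b (j • r + ε)}
  zero_mem' := Eventually.of_forall fun _ _ _ => zero_mem _
  add_mem' := fun hx hy => by
    filter_upwards [hx, hy] with j hx hy ε hε
    exact add_mem (hx ε hε) (hy ε hε)
  smul_mem' := fun t x hx => by
    filter_upwards [hx] with j hx ε hε
    exact Submodule.smul_mem _ t (hx ε hε)

lemma mem_eventualKer : x ∈ ρ.eventualKer r c σ b ↔ ∀ᶠ j : ℤ in atTop, ∀ ε : Fin n → ℤ,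
    ‖ε‖ ≤ c * j + σ → x ∈ ρ.commonKer b (j • r + ε) :=
  Iff.rfl

lemma eventualKer_anti (h : c' < c) (σ σ' : ℝ) :
    ρ.eventualKer r c σ b ≤ ρ.eventualKer r c' σ' b := by
  intro x hx
  filter_upwards [mem_eventualKer.1 hx, eventually_mul_add_le h σ σ'] with j hj hle ε hε
  exact hj ε (hε.trans hle)

lemma eventually_mem_commonKer_add (hx : x ∈ ρ.eventualKer r c (σ + ‖s‖) b) :
    ∀ᶠ j : ℤ in atTop, ∀ ε : Fin n → ℤ, ‖ε‖ ≤ c * j + σ → x ∈ ρ.commonKer b (j • r + ε + s) := by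
  filter_upwards [mem_eventualKer.1 hx] with j hj ε hε
  rw [add_assoc]
  exact hj _ ((norm_add_le _ _).trans (by linarith))

lemma D_mem_eventualKer (h : x ∈ ρ.eventualKer r c σ b)
    (h' : x ∈ ρ.eventualKer r c (σ + ‖s‖) (b * b')) (u : Fin n → ℂ) :
    ρ.D u s b' x ∈ ρ.eventualKer r c σ b := by
  filter_upwards [mem_eventualKer.1 h, eventually_mem_commonKer_add h'] with j h h' ε hε
  exact D_mem_commonKer (h ε hε) (h' ε hε) u

lemma E_mem_eventualKer (h : x ∈ ρ.eventualKer r c σ b)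
    (h' : x ∈ ρ.eventualKer r c (σ + ‖s‖) (b * b')) (t : S) :
    ρ.E t s b' x ∈ ρ.eventualKer r c σ b := by
  filter_upwards [mem_eventualKer.1 h, eventually_mem_commonKer_add h'] with j h h' ε hε
  exact E_mem_commonKer (h ε hε) (h' ε hε) t

lemma forall_mem_eventualKer_of_vector (hirr : ρ.IsIrreducible) (hx : x ≠ 0)
    (h : ∀ b σ, x ∈ ρ.eventualKer r c σ b) (y : V) (b : B) (σ : ℝ) :
    y ∈ ρ.eventualKer r c σ b := by
  let U : Submodule ℂ V := ⨅ (b : B) (σ : ℝ), ρ.eventualKer r c σ b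
  have mem_U : ∀ {y}, y ∈ U ↔ ∀ b σ, y ∈ ρ.eventualKer r c σ b := by simp [U]
  have hU : ρ.Invariant U :=
    ⟨fun u s b' y hy => mem_U.2 fun b σ =>
        D_mem_eventualKer (mem_U.1 hy b σ) (mem_U.1 hy (b * b') (σ + ‖s‖)) u,
      fun t s b' y hy => mem_U.2 fun b σ =>
        E_mem_eventualKer (mem_U.1 hy b σ) (mem_U.1 hy (b * b') (σ + ‖s‖)) t⟩
  have htop : U = ⊤ := (hirr.2 U hU).resolve_left fun hbot => hx <| by
    simpa [hbot] using mem_U.2 h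
  exact mem_U.1 (htop ▸ Submodule.mem_top) b σ

variable (ρ) in
/-- The cone of lattice directions `r` such that every vector is eventually annihilated by the
operators of degree in some open cone around the ray through `r`. -/
def cone : AddSubsemigroup (Fin n → ℤ) where
  carrier := {r | ∃ c > 0, ∀ x b, x ∈ ρ.eventualKer r c 0 b}
  add_mem' := by
    rintro r r' ⟨c, hc, h⟩ ⟨c', hc', h'⟩
    obtain ⟨d, hd, hdmin⟩ := exists_between (lt_min hc hc')
    refine ⟨d, hd, fun x b => ?_⟩
    have hr := eventualKer_anti (hdmin.trans_le (min_le_left _ _)) 0 1 (h x 1)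
    have hr' := eventualKer_anti (hdmin.trans_le (min_le_right _ _)) 0 1 (h' x b)
    filter_upwards [mem_eventualKer.1 hr, mem_eventualKer.1 hr', eventually_ge_atTop 0]
      with j hj hj' hj0 ε hε
    have hj0' : (0 : ℝ) ≤ j := by exact_mod_cast hj0
    rw [smul_add, add_right_comm]
    refine mem_commonKer_add_of_forall_norm_le (fun η hη => ?_) fun η hη => hj' η (by nlinarith)
    rw [add_assoc]
    exact hj _ ((norm_add_le _ _).trans (by linarith))

lemma mem_cone_of_vector (hirr : ρ.IsIrreducible) (hx : x ≠ 0) (hc : 0 < c)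
    (h : ∀ b, x ∈ ρ.eventualKer r c 0 b) : r ∈ ρ.cone :=
  ⟨c / 2, half_pos hc, fun y b => forall_mem_eventualKer_of_vector hirr hx
    (fun b σ => eventualKer_anti (half_lt_self hc) 0 σ (h b)) y b 0⟩

lemma eventually_mem_commonKer (hr : r ∈ ρ.cone) (x : V) (b : B) (q : Fin n → ℤ) :
    ∀ᶠ j : ℤ in atTop, x ∈ ρ.commonKer b (j • r + q) := by
  obtain ⟨c, hc, h⟩ := hr
  filter_upwards [mem_eventualKer.1 (h x b), eventually_mul_add_le hc 0 ‖q‖] with j hj hle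
  exact hj q (by simpa using hle)

lemma eventually_D_eq_zero (hr : r ∈ ρ.cone) (x : V) (u : Fin n → ℂ) (b : B) :
    ∀ᶠ j : ℤ in atTop, ρ.D u (j • r) b x = 0 := by
  filter_upwards [eventually_mem_commonKer hr x b 0] with j hj
  simpa using (mem_commonKer.1 hj).1 u

lemma mem_cone_of_zsmul_mem {l : ℤ} (hl : 0 < l) (h : l • r ∈ ρ.cone) : r ∈ ρ.cone := by
  obtain ⟨c, hc, h⟩ := h
  have hl' : (0 : ℝ) < l := by exact_mod_cast hl
  refine ⟨c / (2 * l), by positivity, fun x b => ?_⟩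
  have hdiv : Tendsto (fun j : ℤ => j / l) atTop atTop :=
    tendsto_atTop.2 fun a => (eventually_ge_atTop (a * l)).mono fun j hj =>
      (Int.le_ediv_iff_mul_le hl).2 hj
  have hker := eventualKer_anti (half_lt_self hc) 0 (l * ‖r‖ + c / 2) (h x b)
  filter_upwards [hdiv.eventually (mem_eventualKer.1 hker)] with j hj ε hε
  have hmod : (j : ℝ) = l * (j / l : ℤ) + (j % l : ℤ) := by
    exact_mod_cast (Int.mul_ediv_add_emod j l).symm
  have hmod0 : (0 : ℝ) ≤ (j % l : ℤ) := by exact_mod_cast Int.emod_nonneg j hl.ne'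
  have hmodl : ((j % l : ℤ) : ℝ) ≤ l := by exact_mod_cast (Int.emod_lt_of_pos j hl).le
  have hsplit : j • r + ε = (j / l) • l • r + ((j % l) • r + ε) := by
    nth_rw 1 [← Int.mul_ediv_add_emod j l]
    module
  rw [hsplit]
  refine hj _ ?_
  calc ‖(j % l) • r + ε‖ ≤ ‖(j % l) • r‖ + ‖ε‖ := norm_add_le _ _
    _ ≤ l * ‖r‖ + c / (2 * l) * j := by
      rw [norm_smul, Int.norm_eq_abs, abs_of_nonneg hmod0]
      gcongr
      simpa using hε
    _ ≤ c / 2 * (j / l : ℤ) + (l * ‖r‖ + c / 2) := by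
      have : c / (2 * l) * j = c / 2 * (j / l : ℤ) + c / 2 * ((j % l : ℤ) / l) := by
        rw [hmod]
        field_simp
      have : c / 2 * ((j % l : ℤ) / l) ≤ c / 2 * 1 := by
        gcongr
        exact (div_le_one hl').2 hmodl
      linarith

lemma exists_pos_forall_add_mem_cone (hr : r ∈ ρ.cone) :
    ∃ c > 0, ∀ j : ℤ, 0 < j → ∀ ε : Fin n → ℤ, ‖ε‖ ≤ c * j → j • r + ε ∈ ρ.cone := by
  obtain ⟨c, hc, h⟩ := hr
  refine ⟨c / 2, half_pos hc, fun j hj ε hε => ⟨c / 2, half_pos hc, fun x b => ?_⟩⟩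
  have hmul : Tendsto (fun i : ℤ => i * j) atTop atTop := tendsto_id.atTop_mul_const' hj
  filter_upwards [hmul.eventually (mem_eventualKer.1 (h x b)), eventually_ge_atTop 0]
    with i hi hi0 ε' hε'
  have hi0' : (0 : ℝ) ≤ i := by exact_mod_cast hi0
  have hj' : (1 : ℝ) ≤ j := by exact_mod_cast hj
  have hsplit : i • (j • r + ε) + ε' = (i * j) • r + (i • ε + ε') := by module
  rw [hsplit]
  refine hi _ ?_
  calc ‖i • ε + ε'‖ ≤ ‖i • ε‖ + ‖ε'‖ := norm_add_le _ _
    _ ≤ i * (c / 2 * j) + c / 2 * i := by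
      rw [norm_smul, Int.norm_eq_abs, abs_of_nonneg hi0']
      gcongr
      simpa using hε'
    _ ≤ i * (c / 2 * j) + c / 2 * (i * j) := by
      gcongr
      exact le_mul_of_one_le_right hi0' hj'
    _ = c * (i * j : ℤ) + 0 := by
      push_cast
      ring

lemma exists_zsmul_add_mem_cone (hr : r ∈ ρ.cone) (σ : ℝ) :
    ∃ k : ℤ, 0 < k ∧ ∀ ε : Fin n → ℤ, ‖ε‖ ≤ σ → k • r + ε ∈ ρ.cone := by
  obtain ⟨c, hc, h⟩ := exists_pos_forall_add_mem_cone hr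
  obtain ⟨k, hk, hk0⟩ :=
    ((eventually_mul_add_le hc 0 σ).and (eventually_gt_atTop 0)).exists
  exact ⟨k, hk0, fun ε hε => h k hk0 ε (hε.trans (by simpa using hk))⟩

lemma zero_notMem_cone (hx : x ≠ 0) (htriv : ρ.trivVectors = ⊥) : (0 : Fin n → ℤ) ∉ ρ.cone :=
  fun h => hx <| eq_zero_of_forall_mem_commonKer htriv fun b q => by
    obtain ⟨j, hj⟩ := (eventually_mem_commonKer h x b q).exists
    simpa using hj

section Injectivity

variable {u : Fin n → ℂ}

lemma mem_commonKer_sub_of_D_neg_eq_zero (hu : LinearIndependent ℤ u)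
    (hx : ρ.D u (-r) 1 x = 0) (hq : q ≠ 0) (hqr : q + r ≠ 0) (h : x ∈ ρ.commonKer b q) :
    x ∈ ρ.commonKer b (q - r) := by
  have := mem_commonKer_add_of_D_eq_zero hx h (pairC_ne_zero hu hq)
    (pairC_ne_zero hu (by rwa [sub_neg_eq_add]))
  rwa [one_mul, neg_add_eq_sub] at this

lemma mem_commonKer_of_forall_add_ne_zero (hu : LinearIndependent ℤ u)
    (hr : r ∈ ρ.cone) (hx : ρ.D u (-r) 1 x = 0)
    (hq : ∀ l : ℤ, 0 < l → q + l • r ≠ 0) : x ∈ ρ.commonKer b q := by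
  obtain ⟨l, hl, hl0⟩ :=
    ((eventually_mem_commonKer hr x b q).and (eventually_ge_atTop 0)).exists
  rw [add_comm] at hl
  induction l, hl0 using Int.leInduction with
  | base => simpa using hl
  | succ l hl0 ih =>
    refine ih ?_
    have := mem_commonKer_sub_of_D_neg_eq_zero hu hx (hq (l + 1) (by lia))
      (fun h => hq (l + 2) (by lia) (by rw [← h]; module)) hl
    rwa [add_one_zsmul, ← add_assoc, add_sub_cancel_right] at this

lemma eq_zero_of_D_neg_eq_zero (hn : 2 ≤ n) (htriv : ρ.trivVectors = ⊥)
    (hu : LinearIndependent ℤ u) (hr : r ∈ ρ.cone) (hx : ρ.D u (-r) 1 x = 0) : x = 0 := by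
  obtain ⟨w, hw, hwr⟩ := exists_orthogonal hn r
  obtain ⟨e, -, he⟩ := exists_norm_le_one_pairC_ne_zero hw
  have off_line : ∀ (b : B) (p : Fin n → ℤ), pairC w p ≠ 0 → x ∈ ρ.commonKer b p :=
    fun b p hp => mem_commonKer_of_forall_add_ne_zero hu hr hx fun l _ h => hp <| by
      rw [← pairC_zero_right w, ← h, pairC_add_right, pairC_zsmul_right, hwr, mul_zero, add_zero]
  refine eq_zero_of_forall_mem_commonKer htriv fun b q => ?_
  by_cases hq : pairC w q = 0
  · have h₁ := off_line 1 (q + e) (by rwa [pairC_add_right, hq, zero_add])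
    have h₂ := off_line b (-e) (by rwa [pairC_neg_right, neg_ne_zero])
    have hne : q + e ≠ -e := fun h => he <| by
      have := congrArg (pairC w) h
      rw [pairC_add_right, pairC_neg_right, hq] at this
      linear_combination this / 2
    simpa using mem_commonKer_add h₁ h₂ hne
  · exact off_line b q hq

end Injectivity

end Cone

section Weights

variable {lam : Fin n → ℂ} {c : S →ₗ[ℂ] ℂ} {m m' q r : Fin n → ℤ} {x : V}

lemma commute_act_zero (p p' : (Fin n → ℂ) × S) : Commute (ρ.act 0 1 p) (ρ.act 0 1 p') := by
  ext x
  simp only [Module.End.mul_apply, act_apply, map_add, ρ.D_D p.1, ρ.D_E p.1, ρ.D_E p'.1,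
    ρ.E_E p.2, pairC_zero_right, zero_smul, sub_zero, D_zero_left, LinearMap.zero_apply, add_zero]
  abel

lemma weightSpace_le_eigenspace_act (p : (Fin n → ℂ) × S) :
    ρ.weightSpace lam c ≤ (ρ.act 0 1 p).eigenspace (pairCC p.1 lam + c p.2) := fun x hx => by
  rw [Module.End.mem_eigenspace_iff, act_apply, hx.1, hx.2, add_smul]

lemma iSupIndep_weightSpace :
    iSupIndep fun μ : (Fin n → ℂ) × (S →ₗ[ℂ] ℂ) => ρ.weightSpace μ.1 μ.2 := by
  have hgen := Module.End.independent_iInf_maxGenEigenspace_of_forall_mapsTo (ρ.act 0 1)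
    fun p p' φ => Module.End.mapsTo_maxGenEigenspace_of_comm (commute_act_zero p' p) φ
  have hinj : Function.Injective fun (μ : (Fin n → ℂ) × (S →ₗ[ℂ] ℂ)) (p : (Fin n → ℂ) × S) =>
      pairCC p.1 μ.1 + μ.2 p.2 := fun μ μ' h => by
    refine Prod.ext (funext fun i => ?_) (LinearMap.ext fun s => ?_)
    · simpa [pairCC, Pi.single_apply] using congrFun h (Pi.single i 1, 0)
    · simpa [pairCC] using congrFun h (0, s)
  exact (hgen.comp hinj).mono fun μ => le_iInf fun p =>
    (weightSpace_le_eigenspace_act p).trans Module.End.eigenspace_le_maxGenEigenspace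

variable (ρ) in
/-- The weight space of weight `(lam + m, c)`; as `m` runs through `ℤⁿ` these are the weight spaces
along one coset of the weight lattice. -/
def wtSpace (lam : Fin n → ℂ) (c : S →ₗ[ℂ] ℂ) (m : Fin n → ℤ) : Submodule ℂ V :=
  ρ.weightSpace (lam + fun i => (m i : ℂ)) c

lemma D_zero_of_mem_wtSpace (hx : x ∈ ρ.wtSpace lam c m) (u : Fin n → ℂ) :
    ρ.D u 0 1 x = (pairCC u lam + pairC u m) • x := by
  rw [hx.1 u, pairCC_add_intCast]

lemma D_mem_wtSpace (hx : x ∈ ρ.wtSpace lam c m) (u : Fin n → ℂ) (b : B) (hm : m + r = m') :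
    ρ.D u r b x ∈ ρ.wtSpace lam c m' := by
  subst hm
  refine ⟨fun w => ?_, fun s => ?_⟩
  · rw [ρ.D_D, D_zero_of_mem_wtSpace hx, pairCC_add_intCast, pairC_add_right, pairC_zero_right,
      zero_smul, sub_zero, zero_add, one_mul, map_smul, ρ.D_smul_u, LinearMap.smul_apply,
      ← add_smul, add_assoc]
  · have := ρ.D_E u r b s 0 1 x
    rw [pairC_zero_right, zero_smul, add_zero, hx.2 s, map_smul] at this
    exact this.symm

lemma E_mem_wtSpace (hx : x ∈ ρ.wtSpace lam c m) (s : S) (b : B) (hm : m + r = m') :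
    ρ.E s r b x ∈ ρ.wtSpace lam c m' := by
  subst hm
  refine ⟨fun w => ?_, fun s' => ?_⟩
  · rw [ρ.D_E, D_zero_of_mem_wtSpace hx, pairCC_add_intCast, pairC_add_right, add_zero, one_mul,
      map_smul, ← add_smul, add_assoc]
  · rw [ρ.E_E, hx.2 s', map_smul]

lemma mem_commonKer_of_wtSpace_eq_bot (hx : x ∈ ρ.wtSpace lam c m)
    (h : ρ.wtSpace lam c (m + q) = ⊥) (b : B) : x ∈ ρ.commonKer b q :=
  mem_commonKer.2 ⟨fun u => (Submodule.mem_bot ℂ).1 (h ▸ D_mem_wtSpace hx u b rfl),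
    fun s => (Submodule.mem_bot ℂ).1 (h ▸ E_mem_wtSpace hx s b rfl)⟩

lemma iSup_wtSpace_eq_top (hirr : ρ.IsIrreducible) (hne : ρ.weightSpace lam c ≠ ⊥) :
    ⨆ m, ρ.wtSpace lam c m = ⊤ := by
  refine (hirr.2 _ ⟨fun u r b => ?_, fun s r b => ?_⟩).resolve_left fun h => hne ?_
  · exact (iSup_le fun m x hx => Submodule.mem_iSup_of_mem (m + r) (D_mem_wtSpace hx u b rfl) :
      ⨆ m, ρ.wtSpace lam c m ≤ (⨆ m, ρ.wtSpace lam c m).comap (ρ.D u r b))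
  · exact (iSup_le fun m x hx => Submodule.mem_iSup_of_mem (m + r) (E_mem_wtSpace hx s b rfl) :
      ⨆ m, ρ.wtSpace lam c m ≤ (⨆ m, ρ.wtSpace lam c m).comap (ρ.E s r b))
  · have hlam : (lam + fun _ => 0) = lam := add_zero lam
    simpa [wtSpace, hlam] using iSup_eq_bot.1 h 0

lemma exists_weightSpace_eq_wtSpace {μ : Fin n → ℂ} {c' : S →ₗ[ℂ] ℂ}
    (htop : ⨆ m, ρ.wtSpace lam c m = ⊤) (hne : ρ.weightSpace μ c' ≠ ⊥) :
    ∃ m, ρ.weightSpace μ c' = ρ.wtSpace lam c m := by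
  by_contra! hcon
  refine hne (disjoint_top.1 ((iSupIndep_weightSpace (ρ := ρ) (μ, c')).mono_right ?_))
  refine htop.ge.trans (iSup_le fun m => ?_)
  refine le_iSup₂_of_le (lam + fun i => (m i : ℂ), c) (fun h => hcon m ?_) le_rfl
  obtain ⟨rfl, rfl⟩ := Prod.mk.inj h
  rfl

lemma exists_forall_exists_lt_finrank_wtSpace
    (hfd : ∀ lam c, FiniteDimensional ℂ (ρ.weightSpace lam c)) (hirr : ρ.IsIrreducible)
    (hnub : ¬ ρ.UniformlyBounded) :
    ∃ lam c, ∀ N : ℕ, ∃ m, N < Module.finrank ℂ (ρ.wtSpace lam c m) := by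
  have hlt : ∀ N : ℕ, ∃ lam c, N < Module.finrank ℂ (ρ.weightSpace lam c) := by
    simpa [UniformlyBounded, ← Module.finrank_eq_rank] using hnub
  have ne_bot : ∀ {lam c} {N : ℕ}, N < Module.finrank ℂ (ρ.weightSpace lam c) →
      ρ.weightSpace lam c ≠ ⊥ := fun h hbot => by
    rw [hbot, finrank_bot] at h
    exact Nat.not_lt_zero _ h
  obtain ⟨lam, c, h₀⟩ := hlt 0
  refine ⟨lam, c, fun N => ?_⟩
  obtain ⟨μ, c', hN⟩ := hlt N
  obtain ⟨m, hm⟩ := exists_weightSpace_eq_wtSpace (iSup_wtSpace_eq_top hirr (ne_bot h₀)) (ne_bot hN)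
  exact ⟨m, hm ▸ hN⟩

end Weights

section UnboundedWeights

variable {lam : Fin n → ℂ} {c : S →ₗ[ℂ] ℂ} {q r : Fin n → ℤ} {x : V} {b b' : B}

lemma mem_commonKer_coeff_add (h : x ∈ ρ.commonKer b q) (h' : x ∈ ρ.commonKer b' q) :
    x ∈ ρ.commonKer (b + b') q := by
  rw [mem_commonKer] at *
  exact ⟨fun u => by rw [ρ.D_add_b, LinearMap.add_apply, h.1, h'.1, add_zero],
    fun s => by rw [ρ.E_add_b, LinearMap.add_apply, h.2, h'.2, add_zero]⟩

lemma mem_commonKer_coeff_smul (t : ℂ) (h : x ∈ ρ.commonKer b q) : x ∈ ρ.commonKer (t • b) q := by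
  rw [mem_commonKer] at *
  exact ⟨fun u => by rw [ρ.D_smul_b, LinearMap.smul_apply, h.1, smul_zero],
    fun s => by rw [ρ.E_smul_b, LinearMap.smul_apply, h.2, smul_zero]⟩

variable (ρ) in
/-- The coefficients `b` with `x ∈ eventualKer r c σ b`, as a subspace of `B`. -/
def eventualCoeff (r : Fin n → ℤ) (c σ : ℝ) (x : V) : Submodule ℂ B where
  carrier := {b | x ∈ ρ.eventualKer r c σ b}
  zero_mem' := Eventually.of_forall fun j ε _ => by
    rw [commonKer, map_zero]
    exact LinearMap.mem_ker.2 rfl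
  add_mem' := fun hb hb' => by
    filter_upwards [hb, hb'] with j hb hb' ε hε
    exact mem_commonKer_coeff_add (hb ε hε) (hb' ε hε)
  smul_mem' := fun t b hb => by
    filter_upwards [hb] with j hb ε hε
    exact mem_commonKer_coeff_smul t (hb ε hε)

lemma mem_eventualCoeff {c σ : ℝ} : b ∈ ρ.eventualCoeff r c σ x ↔ x ∈ ρ.eventualKer r c σ b :=
  Iff.rfl

lemma mem_commonKer_of_norm_le_add_two [NeZero n] {j : ℤ} (hj : 1 ≤ j)
    (h : ∀ ε, ‖ε‖ ≤ (j : ℝ) + 1 → x ∈ ρ.commonKer b (j • r + ε))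
    (h' : ∀ ε, ‖ε‖ ≤ (2 : ℝ) → x ∈ ρ.commonKer b' (r + ε)) {ε : Fin n → ℤ} (hε : ‖ε‖ ≤ j + 2) :
    x ∈ ρ.commonKer (b * b') ((j + 1) • r + ε) := by
  obtain ⟨ε', hε', hsub, hne⟩ := exists_norm_sub_le_add_sub_ne (j • r - r) hj hε
  have hsplit : (j + 1) • r + ε = j • r + (ε - ε') + (r + ε') := by module
  rw [hsplit]
  refine mem_commonKer_add (h _ hsub) (h' _ hε') fun heq => hne ?_
  rw [sub_add_eq_add_sub, heq]
  abel

lemma one_mem_eventualKer [NeZero n] (h : ∀ ε, ‖ε‖ ≤ (2 : ℝ) → x ∈ ρ.commonKer 1 (r + ε)) :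
    x ∈ ρ.eventualKer r 1 1 1 := by
  filter_upwards [eventually_ge_atTop 1] with j hj
  induction j, hj using Int.leInduction with
  | base =>
    intro ε hε
    rw [one_smul]
    exact h ε (hε.trans (by norm_num))
  | succ j hj ih =>
    intro ε hε
    rw [← one_mul (1 : B)]
    exact mem_commonKer_of_norm_le_add_two hj (by simpa using ih) h
      (hε.trans_eq (by push_cast; ring))

lemma mul_mem_eventualKer [NeZero n] (h : x ∈ ρ.eventualKer r 1 1 b)
    (h' : ∀ ε, ‖ε‖ ≤ (2 : ℝ) → x ∈ ρ.commonKer b' (r + ε)) :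
    x ∈ ρ.eventualKer r 1 1 (b * b') := by
  have hsub : Tendsto (fun j : ℤ => j + -1) atTop atTop :=
    tendsto_atTop_add_const_right atTop (-1) tendsto_id
  filter_upwards [hsub.eventually (mem_eventualKer.1 h), eventually_ge_atTop 2] with j hj hj2 ε hε
  have := mem_commonKer_of_norm_le_add_two (j := j + -1) (by lia) (by simpa using hj) h'
    (hε.trans_eq (by push_cast; ring))
  rwa [neg_add_cancel_right] at this

lemma mem_eventualKer_of_adjoin_eq_top [NeZero n] {F : Set B} (hF : Algebra.adjoin ℂ F = ⊤)
    (h : ∀ f ∈ insert 1 F, ∀ ε, ‖ε‖ ≤ (2 : ℝ) → x ∈ ρ.commonKer f (r + ε)) (b : B) :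
    x ∈ ρ.eventualKer r 1 1 b := by
  have one_mem : 1 ∈ ρ.eventualCoeff r 1 1 x :=
    mem_eventualCoeff.2 (one_mem_eventualKer (h 1 (Set.mem_insert 1 F)))
  have mul_mem : ∀ b ∈ ρ.eventualCoeff r 1 1 x, ∀ f ∈ F, b * f ∈ ρ.eventualCoeff r 1 1 x :=
    fun b hb f hf => mem_eventualCoeff.2 <|
      mul_mem_eventualKer (mem_eventualCoeff.1 hb) (h f (Set.mem_insert_of_mem 1 hf))
  have htop : ρ.eventualCoeff r 1 1 x = ⊤ :=
    eq_top_of_adjoin_eq_top_of_mul_mem hF one_mem mul_mem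
  exact mem_eventualCoeff.1 (Submodule.eq_top_iff'.1 htop b)

lemma exists_forall_mem_commonKer_of_lt_finrank [FiniteDimensional ℂ S]
    (hfd : ∀ m, FiniteDimensional ℂ (ρ.wtSpace lam c m)) {M : Set (Fin n → ℤ)}
    (hM : ∀ N : ℕ, ∃ m ∈ M, N < Module.finrank ℂ (ρ.wtSpace lam c m)) (m₀ : Fin n → ℤ)
    (F : Finset B) (T : Finset (Fin n → ℤ)) :
    ∃ m ∈ M, ∃ x : V, x ≠ 0 ∧ ∀ b ∈ F, ∀ ε ∈ T, x ∈ ρ.commonKer b (m₀ - m + ε) := by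
  let P := (Fin n → ℂ) × S
  obtain ⟨m, hmM, hm⟩ :=
    hM (Module.finrank ℂ ((i : F × T) → P →ₗ[ℂ] ρ.wtSpace lam c (m₀ + i.2)))
  have hdeg : ∀ ε : T, m + (m₀ - m + ε) = m₀ + ε := fun ε => by abel
  let f (i : F × T) : ρ.wtSpace lam c m →ₗ[ℂ] P →ₗ[ℂ] ρ.wtSpace lam c (m₀ + i.2) :=
    LinearMap.mk₂ ℂ
      (fun x p => ⟨ρ.act (m₀ - m + i.2) i.1 p x, add_mem
        (D_mem_wtSpace x.2 p.1 _ (hdeg i.2)) (E_mem_wtSpace x.2 p.2 _ (hdeg i.2))⟩)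
      (fun x y p => Subtype.ext (map_add _ _ _)) (fun t x p => Subtype.ext (map_smul _ _ _))
      (fun x p p' => Subtype.ext (by simp only [map_add]; rfl))
      (fun t x p => Subtype.ext (by simp only [map_smul]; rfl))
  obtain ⟨x, hx, hx0⟩ := (Submodule.ne_bot_iff _).1
    (LinearMap.ker_ne_bot_of_finrank_lt (f := LinearMap.pi f) hm)
  refine ⟨m, hmM, x, by simpa using hx0, fun b hb ε hε => LinearMap.ext fun p => ?_⟩
  have := LinearMap.congr_fun (congrFun hx (⟨b, hb⟩, ⟨ε, hε⟩)) p
  exact congrArg Subtype.val this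

lemma exists_sub_mem_cone_of_lt_finrank [NeZero n] [FiniteDimensional ℂ S]
    [Algebra.FiniteType ℂ B] (hirr : ρ.IsIrreducible)
    (hfd : ∀ m, FiniteDimensional ℂ (ρ.wtSpace lam c m)) {M : Set (Fin n → ℤ)}
    (hM : ∀ N : ℕ, ∃ m ∈ M, N < Module.finrank ℂ (ρ.wtSpace lam c m)) (m₀ : Fin n → ℤ) :
    ∃ m ∈ M, m₀ - m ∈ ρ.cone := by
  classical
  obtain ⟨F, hF⟩ := (Algebra.FiniteType.out : (⊤ : Subalgebra ℂ B).FG)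
  have hball : (Metric.closedBall (0 : Fin n → ℤ) 2).Finite :=
    (isCompact_closedBall 0 2).finite_of_discrete
  obtain ⟨m, hmM, x, hx0, hx⟩ :=
    exists_forall_mem_commonKer_of_lt_finrank hfd hM m₀ (insert 1 F) hball.toFinset
  refine ⟨m, hmM, mem_cone_of_vector hirr hx0 (half_pos one_pos) fun b =>
    eventualKer_anti (half_lt_self one_pos) 1 0 (mem_eventualKer_of_adjoin_eq_top hF ?_ b)⟩
  simpa using hx

end UnboundedWeights

section WeightStrings

variable {lam : Fin n → ℂ} {c : S →ₗ[ℂ] ℂ} {m r : Fin n → ℤ} {x : V} {u : Fin n → ℂ}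

lemma finrank_wtSpace_add_le (hn : 2 ≤ n) (htriv : ρ.trivVectors = ⊥)
    [FiniteDimensional ℂ (ρ.wtSpace lam c m)] (hr : r ∈ ρ.cone) :
    Module.finrank ℂ (ρ.wtSpace lam c (m + r)) ≤ Module.finrank ℂ (ρ.wtSpace lam c m) := by
  obtain ⟨u, hu⟩ := exists_linearIndependent_int n
  let f : ρ.wtSpace lam c (m + r) →ₗ[ℂ] ρ.wtSpace lam c m :=
    (ρ.D u (-r) 1).restrict fun x hx => D_mem_wtSpace hx u 1 (add_neg_cancel_right m r)
  refine LinearMap.finrank_le_finrank_of_injective (f := f) ?_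
  rw [← LinearMap.ker_eq_bot, LinearMap.ker_eq_bot']
  intro x hx
  exact Subtype.ext (eq_zero_of_D_neg_eq_zero hn htriv hu hr (congrArg Subtype.val hx))

lemma wtSpace_add_eq_bot (hn : 2 ≤ n) (htriv : ρ.trivVectors = ⊥) (hr : r ∈ ρ.cone)
    (h : ρ.wtSpace lam c m = ⊥) : ρ.wtSpace lam c (m + r) = ⊥ := by
  obtain ⟨u, hu⟩ := exists_linearIndependent_int n
  refine (Submodule.eq_bot_iff _).2 fun x hx => eq_zero_of_D_neg_eq_zero hn htriv hu hr ?_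
  exact (Submodule.mem_bot ℂ).1 (h ▸ D_mem_wtSpace hx u 1 (add_neg_cancel_right m r))

lemma eventually_wtSpace_le_ker (hr : r ∈ ρ.cone) (u : Fin n → ℂ) (m : Fin n → ℤ)
    [FiniteDimensional ℂ (ρ.wtSpace lam c m)] :
    ∀ᶠ j : ℤ in atTop, ρ.wtSpace lam c m ≤ LinearMap.ker (ρ.D u (j • r) 1) := by
  obtain ⟨F, hF⟩ : (ρ.wtSpace lam c m).FG := Module.Finite.iff_fg.1 inferInstance
  rw [← hF]
  filter_upwards [(Filter.eventually_all_finset F).2 fun x _ => eventually_D_eq_zero hr x u 1]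
    with j hj
  exact Submodule.span_le.2 hj

lemma D_sub_one_zsmul_eq_zero (hur : pairC u r ≠ 0) {i : ℤ} (hi : i + 1 ≠ 0)
    (h : ρ.D u (i • r) 1 x = 0) (h' : ρ.D u (i • r) 1 (ρ.D u (-r) 1 x) = 0) :
    ρ.D u ((i - 1) • r) 1 x = 0 := by
  have hcomm := ρ.D_D u (i • r) 1 u (-r) 1 x
  have hcoeff : pairC u (-r) - pairC u (i • r) = -((i + 1 : ℤ) * pairC u r) := by
    rw [pairC_neg_right, pairC_zsmul_right]
    push_cast
    ring
  rw [h, h', map_zero, zero_add, ← sub_smul, hcoeff, ρ.D_smul_u, one_mul, LinearMap.smul_apply]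
    at hcomm
  rw [sub_smul, one_smul, sub_eq_add_neg]
  exact (smul_eq_zero.1 hcomm.symm).resolve_left
    (neg_ne_zero.2 (mul_ne_zero (by exact_mod_cast hi) hur))

lemma wtSpace_add_le_ker (hr : r ∈ ρ.cone) (hur : pairC u r ≠ 0) {a : ℤ} (ha : 0 ≤ a)
    (h : ∀ j, a ≤ j → ρ.wtSpace lam c m ≤ LinearMap.ker (ρ.D u (j • r) 1)) {j : ℤ}
    (hj : a - 1 ≤ j) : ρ.wtSpace lam c (m + r) ≤ LinearMap.ker (ρ.D u (j • r) 1) := by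
  intro x hx
  have hD : ρ.D u (-r) 1 x ∈ ρ.wtSpace lam c m :=
    D_mem_wtSpace hx u 1 (add_neg_cancel_right m r)
  obtain ⟨i, hi, hij⟩ := ((eventually_D_eq_zero hr x u 1).and (eventually_ge_atTop j)).exists
  rw [LinearMap.mem_ker]
  induction j, hij using Int.leInductionDown with
  | base => exact hi
  | pred j _ ih =>
    exact D_sub_one_zsmul_eq_zero hur (by lia) (ih (by lia)) (h j (by lia) hD)

/-- Passing from `m` to `m + r` lowers the bound `a - 1` on `j` by one; at `j = -1` the
injectivity of `D u (-r) 1` applies. -/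
lemma exists_wtSpace_eq_bot (hn : 2 ≤ n) (htriv : ρ.trivVectors = ⊥)
    (hu : LinearIndependent ℤ u) (hr : r ∈ ρ.cone) (hr0 : r ≠ 0) (a : ℕ)
    (h : ∀ j, (a : ℤ) - 1 ≤ j → ρ.wtSpace lam c m ≤ LinearMap.ker (ρ.D u (j • r) 1)) :
    ∃ k : ℤ, ρ.wtSpace lam c (m + k • r) = ⊥ := by
  induction a generalizing m with
  | zero =>
    refine ⟨0, (Submodule.eq_bot_iff _).2 fun x hx =>
      eq_zero_of_D_neg_eq_zero hn htriv hu hr ?_⟩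
    rw [← neg_one_zsmul r]
    exact h (-1) (by simp) (by simpa using hx)
  | succ a ih =>
    obtain ⟨k, hk⟩ := ih fun j hj => wtSpace_add_le_ker hr (pairC_ne_zero hu hr0) (by lia)
      (fun j hj => h j (by lia)) hj
    exact ⟨1 + k, by rwa [add_smul, one_smul, ← add_assoc]⟩

lemma eventually_wtSpace_eq_bot (hn : 2 ≤ n) (htriv : ρ.trivVectors = ⊥) (hr : r ∈ ρ.cone)
    (m : Fin n → ℤ) [FiniteDimensional ℂ (ρ.wtSpace lam c m)] :
    ∀ᶠ k : ℤ in atTop, ρ.wtSpace lam c (m + k • r) = ⊥ := by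
  rcases subsingleton_or_nontrivial V with _ | _
  · exact Eventually.of_forall fun _ => Subsingleton.elim _ _
  obtain ⟨x, hx⟩ := exists_ne (0 : V)
  obtain ⟨u, hu⟩ := exists_linearIndependent_int n
  obtain ⟨a, ha⟩ := eventually_atTop.1 (eventually_wtSpace_le_ker (lam := lam) (c := c) hr u m)
  obtain ⟨k₀, hk₀⟩ := exists_wtSpace_eq_bot (m := m) hn htriv hu hr
    (ne_of_mem_of_not_mem hr (zero_notMem_cone hx htriv)) (a + 1).toNat
    fun j hj => ha j (by lia)
  filter_upwards [eventually_gt_atTop k₀] with k hk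
  rw [← add_sub_cancel k₀ k, add_smul, ← add_assoc]
  exact wtSpace_add_eq_bot hn htriv (zsmul_mem_of_pos hr (by lia)) hk₀

lemma exists_forall_pos_wtSpace_eq_bot (hn : 2 ≤ n) (htriv : ρ.trivVectors = ⊥)
    (hr : r ∈ ρ.cone) [FiniteDimensional ℂ (ρ.wtSpace lam c m)] (hm : ρ.wtSpace lam c m ≠ ⊥) :
    ∃ h : ℤ, 0 ≤ h ∧ ρ.wtSpace lam c (m + h • r) ≠ ⊥ ∧
      ∀ j : ℤ, 0 < j → ρ.wtSpace lam c (m + h • r + j • r) = ⊥ := by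
  obtain ⟨N, hN⟩ := eventually_atTop.1 (eventually_wtSpace_eq_bot (lam := lam) (c := c)
    hn htriv hr m)
  obtain ⟨h, hne, hmax⟩ := Int.exists_greatest_of_bdd
    (P := fun k => ρ.wtSpace lam c (m + k • r) ≠ ⊥)
    ⟨N, fun k hk => by by_contra h; exact hk (hN k (by lia))⟩ ⟨0, by simpa using hm⟩
  refine ⟨h, hmax 0 (by simpa using hm), hne, fun j hj => ?_⟩
  by_contra hj'
  rw [add_assoc, ← add_smul] at hj'
  have := hmax _ hj'
  lia

end WeightStrings

section LowerBound

variable {lam : Fin n → ℂ} {c : S →ₗ[ℂ] ℂ} {m p r s : Fin n → ℤ} {x : V} {u w : Fin n → ℂ}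

lemma isHeisenbergVirasoroTop_D (hx : x ∈ ρ.wtSpace lam c m)
    (htop : ∀ j : ℤ, 0 < j → ρ.wtSpace lam c (m + j • r) = ⊥) (hu : pairC u r = 1)
    (hw : pairC w r = 0) :
    IsHeisenbergVirasoroTop (fun j => ρ.D u (j • r) 1) (fun j => ρ.D w (j • r) 1)
      (pairCC w lam + pairC w m) x where
  d_W i j y := by
    have := ρ.D_D u (i • r) 1 w (j • r) 1 y
    rwa [pairC_zsmul_right, pairC_zsmul_right, hu, hw, mul_one, mul_zero, zero_smul, sub_zero,
      ρ.D_smul_u, one_mul, ← add_smul] at this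
  W_comm i j y := by
    have := ρ.D_D w (i • r) 1 w (j • r) 1 y
    rwa [pairC_zsmul_right, pairC_zsmul_right, hw, mul_zero, mul_zero, sub_self, D_zero_left,
      LinearMap.zero_apply, add_zero] at this
  W_zero := by
    rw [zero_smul]
    exact D_zero_of_mem_wtSpace hx w
  d_pos j hj := (mem_commonKer.1 (mem_commonKer_of_wtSpace_eq_bot hx (htop j hj) 1)).1 u
  W_pos j hj := (mem_commonKer.1 (mem_commonKer_of_wtSpace_eq_bot hx (htop j hj) 1)).1 w

lemma le_finrank_wtSpace (hr : r ≠ 0) (hm : ρ.wtSpace lam c m ≠ ⊥)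
    (htop : ∀ j : ℤ, 0 < j → ρ.wtSpace lam c (m + j • r) = ⊥) (hw : pairC w r = 0)
    (hγ : pairCC w lam + pairC w m ≠ 0) (N : ℕ)
    [FiniteDimensional ℂ (ρ.wtSpace lam c (m - (2 * N + 1 : ℤ) • r))] :
    N ≤ Module.finrank ℂ (ρ.wtSpace lam c (m - (2 * N + 1 : ℤ) • r)) := by
  obtain ⟨v, hv, hv0⟩ := (Submodule.ne_bot_iff _).1 hm
  obtain ⟨u, hu⟩ := exists_pairC_eq_one hr
  have hind := (isHeisenbergVirasoroTop_D hv htop hu hw).linearIndependent (t := 2 * N + 1)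
    hγ hv0 (lt_add_one _)
  have hmem (k : Fin N) : ρ.D w (-(k + 1 : ℤ) • r) 1 (ρ.D w ((k + 1 - (2 * N + 1) : ℤ) • r) 1 v) ∈
      ρ.wtSpace lam c (m - (2 * N + 1 : ℤ) • r) :=
    D_mem_wtSpace (D_mem_wtSpace hv w 1 rfl) w 1 (by module)
  have := (LinearIndependent.of_comp (Submodule.subtype _)
    (v := fun k => (⟨_, hmem k⟩ : ρ.wtSpace lam c (m - (2 * N + 1 : ℤ) • r)))
    hind).fintype_card_le_finrank
  simpa using this

lemma exists_norm_le_one_pairCC_add_pairC_ne_zero (hw : w ≠ 0) (lam : Fin n → ℂ)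
    (m : Fin n → ℤ) : ∃ ε : Fin n → ℤ, ‖ε‖ ≤ 1 ∧ pairCC w lam + pairC w (m - ε) ≠ 0 := by
  by_cases h : pairCC w lam + pairC w m = 0
  · obtain ⟨ε, hε, hne⟩ := exists_norm_le_one_pairC_ne_zero hw
    refine ⟨ε, hε, ?_⟩
    rw [pairC_sub_right, ← add_sub_assoc, h, zero_sub]
    exact neg_ne_zero.2 hne
  · exact ⟨0, by simp, by rwa [sub_zero]⟩

lemma le_finrank_wtSpace_of_forall_add_mem_cone (hn : 2 ≤ n) (htriv : ρ.trivVectors = ⊥)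
    (hfd : ∀ m, FiniteDimensional ℂ (ρ.wtSpace lam c m)) (hs : s ∈ ρ.cone)
    (hp : ∀ ε : Fin n → ℤ, ‖ε‖ ≤ 1 → p + ε ∈ ρ.cone) (hm : ρ.wtSpace lam c m ≠ ⊥) (N : ℕ) :
    N ≤ Module.finrank ℂ (ρ.wtSpace lam c (m - 2 • p - (2 * N + 1 : ℤ) • s)) := by
  obtain ⟨v, -, hv0⟩ := (Submodule.ne_bot_iff _).1 hm
  obtain ⟨w, hw0, hw⟩ := exists_orthogonal hn s
  obtain ⟨ε, hε, hγ⟩ := exists_norm_le_one_pairCC_add_pairC_ne_zero hw0 lam (m - p)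
  have hne : ρ.wtSpace lam c (m - p - ε) ≠ ⊥ := fun h => hm <| by
    simpa [sub_sub] using wtSpace_add_eq_bot hn htriv (hp ε hε) h
  obtain ⟨h, hh, hne', htop⟩ := exists_forall_pos_wtSpace_eq_bot hn htriv hs hne
  refine (le_finrank_wtSpace (ne_of_mem_of_not_mem hs (zero_notMem_cone hv0 htriv)) hne' htop hw
    ?_ N).trans ?_
  · rwa [pairC_add_right, pairC_zsmul_right, hw, mul_zero, add_zero]
  · have hcone : p - ε + h • s ∈ ρ.cone :=
      add_zsmul_mem (by simpa [sub_eq_add_neg] using hp (-ε) (by rwa [norm_neg])) hs hh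
    have hdeg : m - p - ε + h • s - (2 * N + 1 : ℤ) • s =
        m - 2 • p - (2 * N + 1 : ℤ) • s + (p - ε + h • s) := by module
    rw [hdeg]
    exact finrank_wtSpace_add_le hn htriv hcone

end LowerBound

section HighestWeight

variable {lam : Fin n → ℂ} {c : S →ₗ[ℂ] ℂ} {m r s β : Fin n → ℤ}

lemma add_zsmul_mem_cone_of_eventually_wtSpace_eq_bot (hn : 2 ≤ n) (hirr : ρ.IsIrreducible)
    (htriv : ρ.trivVectors = ⊥) (hr : r ∈ ρ.cone) (hm : ρ.wtSpace lam c m ≠ ⊥)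
    (h : ∀ᶠ b : ℤ in atTop, ρ.wtSpace lam c (m + b • s) = ⊥) {k : ℤ} (hk : 0 < k) :
    r + k • s ∈ ρ.cone := by
  obtain ⟨δ, hδ, hcone⟩ := exists_pos_forall_add_mem_cone hr
  obtain ⟨v, hv, hv0⟩ := (Submodule.ne_bot_iff _).1 hm
  refine mem_cone_of_vector hirr hv0 hδ fun b => ?_
  have hmul : Tendsto (fun j : ℤ => j * k) atTop atTop := tendsto_id.atTop_mul_const' hk
  filter_upwards [hmul.eventually h, eventually_gt_atTop 0] with j hj hj0 ε hε
  refine mem_commonKer_of_wtSpace_eq_bot hv ?_ b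
  have hdeg : m + (j • (r + k • s) + ε) = m + (j * k) • s + (j • r + ε) := by module
  rw [hdeg]
  exact wtSpace_add_eq_bot hn htriv (hcone j hj0 ε (by simpa using hε)) hj

lemma sub_zsmul_mem_cone_of_frequently_wtSpace_ne_bot [FiniteDimensional ℂ S]
    [Algebra.FiniteType ℂ B] (hn : 2 ≤ n) (hirr : ρ.IsIrreducible) (htriv : ρ.trivVectors = ⊥)
    (hfd : ∀ m, FiniteDimensional ℂ (ρ.wtSpace lam c m)) (hr : r ∈ ρ.cone)
    (h : ∃ᶠ b : ℤ in atTop, ρ.wtSpace lam c (m + b • s) ≠ ⊥) {k : ℤ} (hk : 0 < k) :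
    r - k • s ∈ ρ.cone := by
  have : NeZero n := ⟨by lia⟩
  obtain ⟨κ, -, hκ⟩ := exists_zsmul_add_mem_cone hr 1
  obtain ⟨_, ⟨b, t, hb, htb, rfl⟩, hcone⟩ := exists_sub_mem_cone_of_lt_finrank hirr hfd
    (M := {q | ∃ b t : ℤ, 0 < b ∧ t * k ≤ b ∧ q = m + b • s - t • r}) (fun N => by
      obtain ⟨b, hne, hb⟩ := (h.and_eventually
        (eventually_ge_atTop (max 1 ((2 * κ + (2 * (N + 1 : ℕ) + 1)) * k)))).exists
      refine ⟨_, ⟨b, _, le_of_max_le_left hb, le_of_max_le_right hb, rfl⟩, ?_⟩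
      have hN := le_finrank_wtSpace_of_forall_add_mem_cone hn htriv hfd hr hκ hne (N + 1)
      rw [add_smul, ← sub_sub, mul_smul, ofNat_smul_eq_nsmul]
      exact hN) m
  have hmul : b • (r - k • s) ∈ ρ.cone := by
    convert add_zsmul_mem (zsmul_mem_of_pos hcone hk) hr (sub_nonneg.2 htb) using 1
    module
  exact mem_cone_of_zsmul_mem hb hmul

lemma isOpenHalfspace_cone [FiniteDimensional ℂ S] [Algebra.FiniteType ℂ B] (hn : 2 ≤ n)
    (hirr : ρ.IsIrreducible) (htriv : ρ.trivVectors = ⊥)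
    (hfd : ∀ m, FiniteDimensional ℂ (ρ.wtSpace lam c m)) (hm : ρ.wtSpace lam c m ≠ ⊥) :
    IsOpenHalfspace ρ.cone where
  zero_notMem := by
    obtain ⟨x, hx⟩ := hirr.1
    exact zero_notMem_cone hx htriv
  saturated _ _ := mem_cone_of_zsmul_mem
  absorbing r hr s := by
    obtain ⟨k, hk, h⟩ := exists_zsmul_add_mem_cone hr ‖s‖
    exact ⟨k, hk, h s le_rfl⟩
  dichotomy r hr s := by
    by_cases h : ∀ᶠ b : ℤ in atTop, ρ.wtSpace lam c (m + b • s) = ⊥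
    · exact Or.inl fun k => add_zsmul_mem_cone_of_eventually_wtSpace_eq_bot hn hirr htriv hr hm h
    · exact Or.inr fun k =>
        sub_zsmul_mem_cone_of_frequently_wtSpace_ne_bot hn hirr htriv hfd hr (not_eventually.1 h)

lemma exists_isLeastModLineality_cone [FiniteDimensional ℂ S] [Algebra.FiniteType ℂ B]
    (hn : 2 ≤ n) (hirr : ρ.IsIrreducible) (htriv : ρ.trivVectors = ⊥)
    (hfd : ∀ m, FiniteDimensional ℂ (ρ.wtSpace lam c m)) (hm : ρ.wtSpace lam c m ≠ ⊥)
    (hr : r ∈ ρ.cone) : ∃ β, IsLeastModLineality ρ.cone β := by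
  by_contra hmin
  have hC := isOpenHalfspace_cone hn hirr htriv hfd hm
  obtain ⟨κ, hκ0, hκ⟩ := exists_zsmul_add_mem_cone hr 1
  suffices hle : ∀ N : ℕ, N ≤ Module.finrank ℂ (ρ.wtSpace lam c (m - 3 • κ • r)) from
    (hle _).not_gt (Nat.lt_succ_self _)
  intro N
  obtain ⟨s, hs, hrs⟩ := hC.exists_sub_nsmul_mem hmin (zsmul_mem_of_pos hr hκ0) (2 * N + 1)
  refine (le_finrank_wtSpace_of_forall_add_mem_cone hn htriv hfd hs hκ hm N).trans ?_
  have hdeg : m - 2 • κ • r - (2 * N + 1 : ℤ) • s =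
      m - 3 • κ • r + (κ • r - (2 * N + 1) • s) := by module
  rw [hdeg]
  exact finrank_wtSpace_add_le hn htriv hrs

lemma exists_forall_posDeg_wtSpace_eq_bot (hn : 2 ≤ n) (htriv : ρ.trivVectors = ⊥)
    (hβ : β ∈ ρ.cone) [FiniteDimensional ℂ (ρ.wtSpace lam c m)] (hm : ρ.wtSpace lam c m ≠ ⊥) :
    ∃ m', ρ.wtSpace lam c m' ≠ ⊥ ∧
      ∀ q, posDeg (lineality ρ.cone) β q → ρ.wtSpace lam c (m' + q) = ⊥ := by
  obtain ⟨k₀, hk₀⟩ := (eventually_wtSpace_eq_bot (lam := lam) (c := c) hn htriv hβ m).exists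
  have hbdd : ∀ j, (∃ a ∈ lineality ρ.cone, ρ.wtSpace lam c (m + j • β + a) ≠ ⊥) → j ≤ k₀ := by
    rintro j ⟨a, ha, hj⟩
    by_contra! hlt
    refine hj ?_
    have hdeg : m + j • β + a = m + k₀ • β + ((j - k₀) • β + a) := by module
    rw [hdeg]
    exact wtSpace_add_eq_bot hn htriv
      (add_mem_of_mem_lineality (zsmul_mem_of_pos hβ (sub_pos.2 hlt)) ha) hk₀
  obtain ⟨j, ⟨a, ha, hj⟩, hmax⟩ := Int.exists_greatest_of_bdd ⟨k₀, hbdd⟩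
    ⟨0, 0, zero_mem _, by simpa using hm⟩
  refine ⟨_, hj, ?_⟩
  rintro _ ⟨a', ha', d, hd, rfl⟩
  by_contra hne
  have hdeg : m + j • β + a + (a' + d • β) = m + (j + d) • β + (a + a') := by module
  have := hmax (j + d) ⟨a + a', add_mem ha ha', hdeg ▸ hne⟩
  lia

lemma exists_isHWVector (hn : 2 ≤ n) (hirr : ρ.IsIrreducible) (htriv : ρ.trivVectors = ⊥)
    (hβ : β ∈ ρ.cone) [FiniteDimensional ℂ (ρ.wtSpace lam c m)] (hm : ρ.wtSpace lam c m ≠ ⊥) :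
    ∃ z, ρ.IsHWVector (lineality ρ.cone) β z := by
  obtain ⟨m', hne, htop⟩ := exists_forall_posDeg_wtSpace_eq_bot hn htriv hβ hm
  obtain ⟨z, hz, hz0⟩ := (Submodule.ne_bot_iff _).1 hne
  have hkill {q : Fin n → ℤ} (hq : posDeg (lineality ρ.cone) β q) (b : B) : z ∈ ρ.commonKer b q :=
    mem_commonKer_of_wtSpace_eq_bot hz (htop q hq) b
  refine ⟨z, hz0, ⟨_, c, hz⟩, fun u r b hr => (mem_commonKer.1 (hkill hr b)).1 u,
    fun s r b hr => (mem_commonKer.1 (hkill hr b)).2 s, fun U hU hzU => ?_⟩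
  exact (hirr.2 U hU).resolve_left fun h => hz0 (by simpa [h] using hzU)

end HighestWeight

end ExtWittRep

end LoopWitt

/-- For `n ≥ 2`, every irreducible Harish-Chandra `𝔏_{S,n}(B)`-module
with non-uniformly bounded weight spaces is a highest weight module: there are
`β ∈ ℤⁿ`, a subgroup `K` with `ℤⁿ = K ⊕ ℤβ`, and a non-zero weight vector `z`
annihilated by the positive part `⊕_{d∈ℕ} (𝔏_{S,n}(B))_{K+dβ}` and generating `V`. -/
theorem stmt10 {n : ℕ} (hn : 2 ≤ n) {S B V : Type*}
    [AddCommGroup S] [Module ℂ S] [FiniteDimensional ℂ S]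
    [CommRing B] [Algebra ℂ B] [Algebra.FiniteType ℂ B]
    [AddCommGroup V] [Module ℂ V]
    (ρ : ExtWittRep n S B V)
    (hhc : ρ.HarishChandra) (hirr : ρ.IsIrreducible) (hnub : ¬ ρ.UniformlyBounded) :
    ∃ (β : Fin n → ℤ) (K : AddSubgroup (Fin n → ℤ)),
      IsDirectSumDecomp K β ∧ ∃ z : V, ρ.IsHWVector K β z := by
  have : NeZero n := ⟨by lia⟩
  have htriv := ExtWittRep.trivVectors_eq_bot hirr hnub
  obtain ⟨lam, c, hlt⟩ := ExtWittRep.exists_forall_exists_lt_finrank_wtSpace hhc.2 hirr hnub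
  have hfd (m) : FiniteDimensional ℂ (ρ.wtSpace lam c m) := hhc.2 _ _
  obtain ⟨m, hm⟩ : ∃ m, ρ.wtSpace lam c m ≠ ⊥ :=
    (hlt 0).imp fun _ h => Submodule.one_le_finrank_iff.1 h
  obtain ⟨_, -, hr⟩ := ExtWittRep.exists_sub_mem_cone_of_lt_finrank hirr hfd (M := Set.univ)
    (by simpa using hlt) 0
  obtain ⟨β, hβ⟩ := ExtWittRep.exists_isLeastModLineality_cone hn hirr htriv hfd hm hr
  have hhalf := ExtWittRep.isOpenHalfspace_cone hn hirr htriv hfd hm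
  exact ⟨β, lineality ρ.cone, hhalf.isDirectSumDecomp hβ,
    ExtWittRep.exists_isHWVector hn hirr htriv hβ.1 hm⟩
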